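/- arXiv:2203.10423 — 4 statements merged into one kernel-verified Lean document; each statement's English description precedes it below -/
import Mathlib

section
/- Let 𝔽 be a field and let K ≥ 4 be a constant such that every finite set A ⊆ 𝔽² (with |A| ≤ char(𝔽)^{4/3} when char(𝔽) > 0) satisfies: the number of triples (a,b,c) ∈ A×A×A with ‖a−b‖ = ‖a−c‖ and ‖b−c‖ ≠ 0 is at most K|A|^{7/3}. Let T be a tree with k ≥ 1 edges and v a vertex of T. Let E ⊆ 𝔽² be a finite set with |E| sufficiently large (and |E| ≤ char(𝔽)^{4/3} when char(𝔽) > 0), and assume that every isotropic line contains at most M = 4^{-1}(16K)^{-(k-1)}(⌊|E|/8⌋)^{(2/3)^{k-1}} points of E. Then there exist a constant c(k) > 0 (independent of E) and a subset E′ ⊆ E with |E′| ≥ c(k)·|E|^{(2/3)^k} such that for every x ∈ E′ the number of distinct trees (T′, x) with vertices in E that are isomorphic to (T, v) is at least c(k)·|E|^{2k/3}. -/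
/-! The pins survive in positive proportion at every step. In a set `A` whose isotropic lines are
poor, at most half of the points are at distance `0` from a given `a`, and on a circle of nonzero
radius two distinct points are never at distance `0` (`eq_of_fdist_eq`; characteristic `2` is
excluded by the size of `E`). Hence the bound on nondegenerate isosceles triangles and
Cauchy-Schwarz show that at least half of the points `a ∈ A` determine `≫ |A|^(2/3)` distances to
`A` (`exists_half_rich`).

Iterating gives a chain `E = A 0 ⊇ A 1 ⊇ ⋯ ⊇ A k` with `|A j| ≥ 2^(-j) |E|`, in which every
point of `A (j + 1)` sees `D ≫ |E|^(2/3)` distances to `A j`. Place the root at `x ∈ A k` and the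
vertices at depth `n` in `A (k - n)`. Each of the `k` nonroot vertices can be chosen in `D` ways
giving different lengths to the edge from its parent, so `x` is the root of at least `D ^ k`
trees with different edge-length vectors (`pow_le_treeCount`). So `E' = A k` works; it even has
size `≫ |E|`. -/

/-- The "distance" between two points of `F × F`:
`‖x - y‖ = (x₁ - y₁)² + (x₂ - y₂)²`. -/
def fdist {F : Type*} [CommRing F] (x y : F × F) : F :=
  (x.1 - y.1) ^ 2 + (x.2 - y.2) ^ 2

/-- The edge-length function of an embedding `φ` of vertices, as a function on `Sym2 V`. -/
def edgeLengths {F : Type*} [CommRing F] {V : Type*} (φ : V → F × F) : Sym2 V → F :=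
  Sym2.lift ⟨fun a b => fdist (φ a) (φ b), fun a b => by simp only [fdist]; ring⟩

/-- The number of distinct trees `(T', x)` with vertices (other than `x`) in `A` which are
isomorphic to `(G, v)`: the number of distinct edge-length vectors, indexed by the edges of `G`,
coming from maps `φ : V → F × F` with `φ v = x` and `φ u ∈ A` for all `u ≠ v`. -/
noncomputable def treeCount {F : Type*} [CommRing F] {V : Type*} (G : SimpleGraph V) (v : V)
    (x : F × F) (A : Set (F × F)) : ℕ :=
  Set.ncard { f : G.edgeSet → F |
    ∃ φ : V → F × F, φ v = x ∧ (∀ u, u ≠ v → φ u ∈ A) ∧ f = fun e => edgeLengths φ e.1 }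

/-- The pinned nonzero distance set `Δ*_x(E)`. -/
def pinnedDist {F : Type*} [CommRing F] (x : F × F) (E : Set (F × F)) : Set F :=
  {d | d ≠ 0 ∧ ∃ y ∈ E, fdist x y = d}

/-- The number of triples `(a, b, c) ∈ A × B × C` with `‖a-b‖ = ‖a-c‖` and `‖b-c‖ ≠ 0`. -/
noncomputable def tripleCount {F : Type*} [CommRing F] (A B C : Set (F × F)) : ℕ :=
  Set.ncard {t : (F × F) × (F × F) × (F × F) |
    t.1 ∈ A ∧ t.2.1 ∈ B ∧ t.2.2 ∈ C ∧
    fdist t.1 t.2.1 = fdist t.1 t.2.2 ∧ fdist t.2.1 t.2.2 ≠ 0}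

/-- `ℓ` is an isotropic line: a line all of whose pairs of points are at distance `0`. -/
def IsIsotropicLine {F : Type*} [CommRing F] (ℓ : Set (F × F)) : Prop :=
  (∃ a d : F × F, d ≠ 0 ∧ ℓ = {z | ∃ t : F, z = a + t • d}) ∧
    ∀ x ∈ ℓ, ∀ y ∈ ℓ, fdist x y = 0

/-- The perpendicular bisector of `a` and `b`. -/
def bisector {F : Type*} [CommRing F] (a b : F × F) : Set (F × F) :=
  {z | fdist z a = fdist z b}

/-- The bisector energy `Q(E)`. -/
noncomputable def bisectorEnergy {F : Type*} [CommRing F] (E : Set (F × F)) : ℕ :=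
  Set.ncard {q : (F × F) × (F × F) × (F × F) × (F × F) |
    q.1 ∈ E ∧ q.2.1 ∈ E ∧ q.2.2.1 ∈ E ∧ q.2.2.2 ∈ E ∧
    fdist q.1 q.2.1 ≠ 0 ∧ fdist q.2.2.1 q.2.2.2 ≠ 0 ∧
    bisector q.1 q.2.1 = bisector q.2.2.1 q.2.2.2}

/-! ### Geometry of the quadratic form -/

/-- A circle of nonzero radius contains no two distinct points at distance `0`: with `p = a - b`,
`q = a - c` one has `p·p = q·q = p·q`, hence `det (p, q) = 0`, hence `p = q`. -/
lemma eq_of_fdist_eq {F : Type*} [Field F] (h2 : (2 : F) ≠ 0) {a b c : F × F}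
    (hab : fdist a b ≠ 0) (h : fdist a b = fdist a c) (hbc : fdist b c = 0) : b = c := by
  obtain ⟨a1, a2⟩ := a
  obtain ⟨b1, b2⟩ := b
  obtain ⟨c1, c2⟩ := c
  simp only [fdist] at *
  have hdot : (a1 - b1) * (a1 - c1) + (a2 - b2) * (a2 - c2) = (a1 - b1) ^ 2 + (a2 - b2) ^ 2 := by
    apply mul_left_cancel₀ h2
    linear_combination -h - hbc
  have hdet : (a1 - b1) * (a2 - c2) - (a2 - b2) * (a1 - c1) = 0 := by
    apply pow_eq_zero_iff (two_ne_zero) |>.1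
    linear_combination (-((a1 - b1) ^ 2 + (a2 - b2) ^ 2)) * h
      - ((a1 - b1) * (a1 - c1) + (a2 - b2) * (a2 - c2) + (a1 - b1) ^ 2 + (a2 - b2) ^ 2) * hdot
  have h1 : b1 = c1 := by
    apply mul_left_cancel₀ hab
    linear_combination (a1 - b1) * hdot - (a2 - b2) * hdet
  have h3 : b2 = c2 := by
    apply mul_left_cancel₀ hab
    linear_combination (a2 - b2) * hdot + (a1 - b1) * hdet
  rw [h1, h3]

lemma isIsotropicLine_of_sq {F : Type*} [Field F] (x : F × F) {i : F} (hi : i ^ 2 = -1) :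
    IsIsotropicLine {z | ∃ t : F, z = x + t • ((1, i) : F × F)} := by
  refine ⟨⟨x, (1, i), by simp, rfl⟩, ?_⟩
  rintro _ ⟨s, rfl⟩ _ ⟨t, rfl⟩
  simp only [fdist, Prod.fst_add, Prod.snd_add, Prod.smul_fst, Prod.smul_snd, smul_eq_mul]
  linear_combination (s - t) ^ 2 * hi

/-- The points at distance `0` from `x` lie on at most two isotropic lines; when `-1` is not a
square, `x` is the only one. -/
lemma card_fdist_zero_le {F : Type*} [Field F] [DecidableEq F] (A : Finset (F × F)) {M : ℝ}
    (hM0 : 0 ≤ M)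
    (hM : ∀ ℓ : Set (F × F), IsIsotropicLine ℓ → ((↑A ∩ ℓ).ncard : ℝ) ≤ M) (x : F × F) :
    ((A.filter (fun b => fdist x b = 0)).card : ℝ) ≤ 2 * M + 1 := by
  by_cases hi : ∃ i : F, i ^ 2 = -1
  · obtain ⟨i, hi⟩ := hi
    have hi' : (-i) ^ 2 = -1 := by rw [neg_sq, hi]
    have h1 := hM _ (isIsotropicLine_of_sq x hi)
    have h2 := hM _ (isIsotropicLine_of_sq x hi')
    have hsub : ((A.filter (fun b => fdist x b = 0) : Finset (F × F)) : Set (F × F)) ⊆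
        (↑A ∩ {z | ∃ t : F, z = x + t • ((1, i) : F × F)}) ∪
          (↑A ∩ {z | ∃ t : F, z = x + t • ((1, -i) : F × F)}) := by
      intro b hb
      obtain ⟨hbA, hb0⟩ := Finset.mem_filter.1 (Finset.mem_coe.1 hb)
      have hfac : ((b.2 - x.2) - i * (b.1 - x.1)) * ((b.2 - x.2) + i * (b.1 - x.1)) = 0 := by
        simp only [fdist] at hb0
        linear_combination hb0 - (b.1 - x.1) ^ 2 * hi
      rcases mul_eq_zero.1 hfac with h | h
      · refine Or.inl ⟨hbA, b.1 - x.1, ?_⟩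
        ext
        · simp
        · simp only [Prod.snd_add, Prod.smul_snd, smul_eq_mul]
          linear_combination h
      · refine Or.inr ⟨hbA, b.1 - x.1, ?_⟩
        ext
        · simp
        · simp only [Prod.snd_add, Prod.smul_snd, smul_eq_mul]
          linear_combination h
    have hfin := (A.finite_toSet.inter_of_left {z | ∃ t : F, z = x + t • ((1, i) : F × F)}).union
      (A.finite_toSet.inter_of_left {z | ∃ t : F, z = x + t • ((1, -i) : F × F)})
    have h3 := (Set.ncard_le_ncard hsub hfin).trans (Set.ncard_union_le _ _)
    rw [Set.ncard_coe_finset] at h3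
    have h4 : ((A.filter (fun b => fdist x b = 0)).card : ℝ) ≤ _ := Nat.cast_le.2 h3
    push_cast at h4
    linarith
  · have hsub : A.filter (fun b => fdist x b = 0) ⊆ {x} := by
      intro b hb
      have hb0 := (Finset.mem_filter.1 hb).2
      simp only [fdist] at hb0
      have h1 : x.1 - b.1 = 0 := by
        by_contra hne
        refine hi ⟨(x.2 - b.2) / (x.1 - b.1), ?_⟩
        field_simp
        linear_combination hb0
      have h2 : x.2 - b.2 = 0 := by
        rw [h1] at hb0
        simpa using hb0
      rw [Finset.mem_singleton]
      ext
      · exact (sub_eq_zero.1 h1).symm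
      · exact (sub_eq_zero.1 h2).symm
    have h1 : ((A.filter (fun b => fdist x b = 0)).card : ℝ) ≤ (1 : ℕ) :=
      Nat.cast_le.2 ((Finset.card_le_card hsub).trans (Finset.card_singleton x).le)
    push_cast at h1
    linarith

/-! ### Pins with many distances -/

/-- Cauchy-Schwarz: few coincidences of `f` force a large image. -/
lemma sq_card_le_image_mul {α β : Type*} [DecidableEq α] [DecidableEq β] (B : Finset α)
    (f : α → β) :
    B.card ^ 2 ≤ (B.image f).card * ((B ×ˢ B).filter (fun q => f q.1 = f q.2)).card := by
  have h1 : B.card = ∑ d ∈ B.image f, (B.filter (fun b => f b = d)).card :=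
    Finset.card_eq_sum_card_image f B
  have h2 : ((B ×ˢ B).filter (fun q => f q.1 = f q.2)).card =
      ∑ d ∈ B.image f, (B.filter (fun b => f b = d)).card ^ 2 := by
    rw [Finset.card_eq_sum_card_fiberwise (f := fun q => f q.1) (t := B.image f)]
    · refine Finset.sum_congr rfl fun d _ => ?_
      rw [sq, ← Finset.card_product]
      congr 1
      ext ⟨a, b⟩
      simp only [Finset.mem_filter, Finset.mem_product]
      grind
    · intro q hq
      have := (Finset.mem_filter.1 (Finset.mem_coe.1 hq)).1
      exact Finset.mem_coe.2 (Finset.mem_image_of_mem f (Finset.mem_product.1 this).1)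
  rw [h2]
  conv_lhs => rw [h1]
  exact sq_sum_le_card_mul_sum_sq

/-- The pairs `(b, c) ∈ A × A` for which `(a, b, c)` is counted by `tripleCount A A A`. -/
def isoPairs {F : Type*} [Field F] [DecidableEq F] (A : Finset (F × F)) (a : F × F) :
    Finset ((F × F) × (F × F)) :=
  (A ×ˢ A).filter (fun q => fdist a q.1 = fdist a q.2 ∧ fdist q.1 q.2 ≠ 0)

lemma sum_isoPairs_le {F : Type*} [Field F] [DecidableEq F] (A : Finset (F × F)) :
    ∑ a ∈ A, (isoPairs A a).card ≤ tripleCount (A : Set (F × F)) ↑A ↑A := by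
  rw [← Finset.card_sigma, ← Set.ncard_coe_finset]
  refine Set.ncard_le_ncard_of_injOn (fun s => (s.1, s.2)) ?_ ?_ ?_
  · rintro ⟨a, q⟩ hs
    simp only [isoPairs, Finset.mem_coe, Finset.mem_sigma, Finset.mem_filter,
      Finset.mem_product] at hs
    exact ⟨hs.1, hs.2.1.1, hs.2.1.2, hs.2.2.1, hs.2.2.2⟩
  · rintro ⟨a, q⟩ _ ⟨a', q'⟩ _ h
    simp only [Prod.mk.injEq] at h
    obtain ⟨rfl, rfl⟩ := h
    rfl
  · refine (A ×ˢ A ×ˢ A).finite_toSet.subset ?_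
    rintro ⟨a, b, c⟩ ⟨ha, hb, hc, -⟩
    simp only [Finset.coe_product, Set.mem_prod]
    exact ⟨ha, hb, hc⟩

/-- If `a` is the apex of at most `2K|A|^(4/3)` nondegenerate isosceles triangles and at most half
of `A` is at distance `0` from `a`, then `a` determines at least `|A|^(2/3) / (12K)` distances. -/
lemma rich_of_isoPairs_le {F : Type*} [Field F] [DecidableEq F] (h2 : (2 : F) ≠ 0) {K : ℝ}
    (hK : 4 ≤ K) (A : Finset (F × F)) (hA : 4 ≤ A.card) (a : F × F)
    (hz : ((A.filter (fun b => fdist a b = 0)).card : ℝ) ≤ A.card / 2)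
    (ht : ((isoPairs A a).card : ℝ) ≤ 2 * K * (A.card : ℝ) ^ ((4 : ℝ) / 3)) :
    (A.card : ℝ) ^ ((2 : ℝ) / 3) ≤ 12 * K * ((A.image (fdist a)).card : ℝ) := by
  set B := A.filter (fun b => ¬ fdist a b = 0) with hB
  have hsplit : (A.filter (fun b => fdist a b = 0)).card + B.card = A.card :=
    Finset.card_filter_add_card_filter_not _
  have hBcard : (A.card : ℝ) / 2 ≤ B.card := by
    have : ((A.filter (fun b => fdist a b = 0)).card : ℝ) + B.card = A.card := by
      exact_mod_cast hsplit
    linarith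
  have hCS := sq_card_le_image_mul B (fdist a)
  have hpairs : ((B ×ˢ B).filter (fun q => fdist a q.1 = fdist a q.2)).card ≤
      (isoPairs A a).card + A.card := by
    -- On `B` the only degenerate coincidences are the diagonal ones.
    have hsub : (B ×ˢ B).filter (fun q => fdist a q.1 = fdist a q.2) ⊆
        isoPairs A a ∪ A.image (fun b => (b, b)) := by
      rintro ⟨b, c⟩ hq
      simp only [hB, Finset.mem_filter, Finset.mem_product] at hq
      obtain ⟨⟨⟨hbA, hb0⟩, hcA, -⟩, hbc⟩ := hq
      by_cases h0 : fdist b c = 0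
      · obtain rfl := eq_of_fdist_eq h2 hb0 hbc h0
        exact Finset.mem_union_right _ (Finset.mem_image_of_mem _ hbA)
      · refine Finset.mem_union_left _ ?_
        simp only [isoPairs, Finset.mem_filter, Finset.mem_product]
        exact ⟨⟨hbA, hcA⟩, hbc, h0⟩
    exact (Finset.card_le_card hsub).trans ((Finset.card_union_le _ _).trans
      (Nat.add_le_add_left Finset.card_image_le _))
  have himg : (B.image (fdist a)).card ≤ (A.image (fdist a)).card :=
    Finset.card_le_card (Finset.image_subset_image (Finset.filter_subset _ _))
  have hnat : B.card ^ 2 ≤ (A.image (fdist a)).card * ((isoPairs A a).card + A.card) :=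
    hCS.trans (Nat.mul_le_mul himg hpairs)
  have hreal : (B.card : ℝ) ^ 2 ≤
      ((A.image (fdist a)).card : ℝ) * ((isoPairs A a).card + A.card) := by exact_mod_cast hnat
  have hn4 : (4 : ℝ) ≤ A.card := by exact_mod_cast hA
  set n : ℝ := (A.card : ℝ) with hn
  set D : ℝ := ((A.image (fdist a)).card : ℝ)
  have hD : 0 ≤ D := Nat.cast_nonneg _
  have hle : n ≤ n ^ ((4 : ℝ) / 3) := by
    conv_lhs => rw [← Real.rpow_one n]
    exact Real.rpow_le_rpow_of_exponent_le (by linarith) (by norm_num)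
  have hpos : 0 < n ^ ((4 : ℝ) / 3) := Real.rpow_pos_of_pos (by linarith) _
  have hsq : n ^ ((2 : ℝ) / 3) * n ^ ((4 : ℝ) / 3) = n ^ 2 := by
    rw [← Real.rpow_add (by linarith)]
    norm_num
  have hsum : ((isoPairs A a).card : ℝ) + n ≤ 3 * K * n ^ ((4 : ℝ) / 3) := by nlinarith
  have hB2 : (n / 2) ^ 2 ≤ (B.card : ℝ) ^ 2 := pow_le_pow_left₀ (by linarith) hBcard 2
  have hD2 := mul_le_mul_of_nonneg_left hsum hD
  refine le_of_mul_le_mul_right ?_ hpos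
  rw [hsq]
  nlinarith

/-- At least half of the points of `A` determine `≫ |A|^(2/3)` distances to `A`, by averaging the
bound on isosceles triangles over the apex. -/
lemma exists_half_rich {F : Type*} [Field F] [DecidableEq F] (h2 : (2 : F) ≠ 0) {K M : ℝ}
    (hK : 4 ≤ K) (A : Finset (F × F)) (hA : 4 ≤ A.card)
    (hT : (tripleCount (A : Set (F × F)) ↑A ↑A : ℝ) ≤ K * (A.card : ℝ) ^ ((7 : ℝ) / 3))
    (hM0 : 0 ≤ M) (hMA : 8 * M ≤ A.card)
    (hM : ∀ ℓ : Set (F × F), IsIsotropicLine ℓ → ((↑A ∩ ℓ).ncard : ℝ) ≤ M) :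
    ∃ A' ⊆ A, A.card ≤ 2 * A'.card ∧ ∀ a ∈ A',
      (A.card : ℝ) ^ ((2 : ℝ) / 3) ≤ 12 * K * ((A.image (fdist a)).card : ℝ) := by
  have hn4 : (4 : ℝ) ≤ A.card := by exact_mod_cast hA
  set L : ℝ := 2 * K * (A.card : ℝ) ^ ((4 : ℝ) / 3) with hL
  have hpos : 0 < (A.card : ℝ) ^ ((4 : ℝ) / 3) := Real.rpow_pos_of_pos (by linarith) _
  have hL0 : 0 < L := by positivity
  refine ⟨A.filter (fun a => ((isoPairs A a).card : ℝ) ≤ L), Finset.filter_subset _ _, ?_, ?_⟩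
  · have hsplit : (A.filter (fun a => ((isoPairs A a).card : ℝ) ≤ L)).card +
        (A.filter (fun a => ¬ ((isoPairs A a).card : ℝ) ≤ L)).card = A.card :=
      Finset.card_filter_add_card_filter_not _
    have hbad : ((A.filter (fun a => ¬ ((isoPairs A a).card : ℝ) ≤ L)).card : ℝ) * L ≤
        (A.card : ℝ) / 2 * L := by
      calc ((A.filter (fun a => ¬ ((isoPairs A a).card : ℝ) ≤ L)).card : ℝ) * L
          = ∑ a ∈ A.filter (fun a => ¬ ((isoPairs A a).card : ℝ) ≤ L), L := by simp
        _ ≤ ∑ a ∈ A.filter (fun a => ¬ ((isoPairs A a).card : ℝ) ≤ L),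
              ((isoPairs A a).card : ℝ) :=
            Finset.sum_le_sum fun a ha => (not_le.1 (Finset.mem_filter.1 ha).2).le
        _ ≤ ∑ a ∈ A, ((isoPairs A a).card : ℝ) :=
            Finset.sum_le_sum_of_subset_of_nonneg (Finset.filter_subset _ _)
              fun _ _ _ => Nat.cast_nonneg _
        _ ≤ (tripleCount (A : Set (F × F)) ↑A ↑A : ℝ) := by exact_mod_cast sum_isoPairs_le A
        _ ≤ K * (A.card : ℝ) ^ ((7 : ℝ) / 3) := hT
        _ = (A.card : ℝ) / 2 * L := by
            have : (A.card : ℝ) ^ ((7 : ℝ) / 3) = A.card * (A.card : ℝ) ^ ((4 : ℝ) / 3) := by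
              rw [show (7 : ℝ) / 3 = 1 + 4 / 3 by norm_num, Real.rpow_add (by linarith),
                Real.rpow_one]
            rw [this, hL]
            ring
    have hbad' := le_of_mul_le_mul_right hbad hL0
    have : ((A.filter (fun a => ((isoPairs A a).card : ℝ) ≤ L)).card : ℝ) +
        (A.filter (fun a => ¬ ((isoPairs A a).card : ℝ) ≤ L)).card = A.card := by
      exact_mod_cast hsplit
    have h3 : (A.card : ℝ) ≤
        2 * (A.filter (fun a => ((isoPairs A a).card : ℝ) ≤ L)).card := by linarith
    exact_mod_cast h3
  · intro a ha
    refine rich_of_isoPairs_le h2 hK A hA a ?_ (Finset.mem_filter.1 ha).2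
    have := card_fdist_zero_le A hM0 hM a
    linarith

/-! ### Embedding a tree along a nested chain -/

lemma exists_parent {V : Type*} {G : SimpleGraph V} (hG : G.Connected) (v : V) {u : V}
    (hu : u ≠ v) : ∃ p, G.Adj p u ∧ G.dist v u = G.dist v p + 1 := by
  obtain ⟨w, hw⟩ := hG.exists_walk_length_eq_dist u v
  cases w with
  | nil => exact absurd rfl hu
  | @cons _ p _ h q =>
    refine ⟨p, h.symm, ?_⟩
    have h1 : G.dist p v ≤ q.length := SimpleGraph.dist_le q
    have h2 : G.dist v u ≤ G.dist v p + G.dist p u := hG.dist_triangle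
    have h3 : G.dist p u = 1 := SimpleGraph.dist_eq_one_iff_adj.2 h.symm
    rw [SimpleGraph.Walk.length_cons] at hw
    rw [SimpleGraph.dist_comm (u := v) (v := p)] at *
    rw [SimpleGraph.dist_comm (u := u) (v := v)] at hw
    omega

/-- Along a chain `A k, …, A 0` in which every point of `A (j + 1)` sees at least `D` distances to
`A j`, put the vertex at depth `n` into `A (k - n)`: each nonroot vertex then has `D` choices
giving different lengths to the edge from its parent, and the edge lengths determine the
choices. -/
lemma pow_le_treeCount {F : Type*} [Field F] [DecidableEq F] {V : Type*} [Fintype V]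
    (G : SimpleGraph V) (hG : G.Connected) (v : V) (k : ℕ) (hd : ∀ u, G.dist v u ≤ k)
    (E : Finset (F × F)) (A : ℕ → Finset (F × F)) (hAE : ∀ j ≤ k, A j ⊆ E) (D : ℕ)
    (hrich : ∀ j < k, ∀ a ∈ A (j + 1), D ≤ ((A j).image (fdist a)).card)
    (x : F × F) (hx : x ∈ A k) :
    D ^ (Fintype.card V - 1) ≤ treeCount G v x (E : Set (F × F)) := by
  classical
  have hy : ∀ (j : ℕ) (a : F × F), ∃ y : Fin D → F × F, j < k → a ∈ A (j + 1) →
      (∀ i, y i ∈ A j) ∧ Function.Injective (fun i => fdist a (y i)) := by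
    intro j a
    by_cases h : j < k ∧ a ∈ A (j + 1)
    · have hcard : Fintype.card (Fin D) ≤ Fintype.card ((A j).image (fdist a)) := by
        rw [Fintype.card_fin, Fintype.card_coe]
        exact hrich j h.1 a h.2
      obtain ⟨e⟩ := Function.Embedding.nonempty_of_card_le hcard
      have he : ∀ i, ∃ b ∈ A j, fdist a b = (e i : F) := fun i => Finset.mem_image.1 (e i).2
      choose y hyA hye using he
      refine ⟨y, fun _ _ => ⟨hyA, fun i i' hii => e.injective (Subtype.ext ?_)⟩⟩
      rw [← hye i, ← hye i']
      exact hii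
    · exact ⟨fun _ => a, fun h1 h2 => absurd ⟨h1, h2⟩ h⟩
  choose y hy using hy
  have hp : ∀ u : {u : V // u ≠ v}, ∃ p, G.Adj p u.1 ∧ G.dist v u.1 = G.dist v p + 1 :=
    fun u => exists_parent hG v u.2
  choose p hpadj hpdist using hp
  -- Vertices are placed level by level, so each `c` yields its placement `φ c` by recursion.
  have hφ : ∀ c : {u : V // u ≠ v} → Fin D, ∃ φ : V → F × F, φ v = x ∧
      ∀ u : {u : V // u ≠ v}, φ u.1 = y (k - G.dist v u.1) (φ (p u)) (c u) := by
    intro c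
    let Φ : ℕ → V → F × F := fun n => Nat.rec (fun _ => x)
      (fun n ψ u => if h : u = v then x else y (k - (n + 1)) (ψ (p ⟨u, h⟩)) (c ⟨u, h⟩)) n
    refine ⟨fun u => Φ (G.dist v u) u, ?_, ?_⟩
    · simp [Φ]
    · rintro ⟨u, hu⟩
      simp only
      rw [hpdist ⟨u, hu⟩]
      simp only [Φ]
      rw [dif_neg hu]
  choose φ hφv hφu using hφ
  have hmem : ∀ c n u, G.dist v u = n → φ c u ∈ A (k - n) := by
    intro c n
    induction n with
    | zero =>
      intro u hu
      obtain rfl := hG.dist_eq_zero_iff.1 hu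
      rw [hφv]
      exact hx
    | succ n ih =>
      intro u hu
      have huv : u ≠ v := by
        rintro rfl
        simp at hu
      have h1 := ih (p ⟨u, huv⟩) (by have := hpdist ⟨u, huv⟩; simp only at this; omega)
      have hk := hd u
      rw [show k - n = k - (n + 1) + 1 by omega] at h1
      have := hφu c ⟨u, huv⟩
      simp only [hu] at this
      rw [this]
      exact (hy _ _ (by omega) h1).1 _
  have hinj : Function.Injective
      (fun (c : {u : V // u ≠ v} → Fin D) (e : G.edgeSet) => edgeLengths (φ c) e.1) := by
    intro c c' hcc
    have hedge : ∀ a b, G.Adj a b → fdist (φ c a) (φ c b) = fdist (φ c' a) (φ c' b) :=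
      fun a b hab => congrFun hcc ⟨s(a, b), hab⟩
    have key : ∀ u : {u : V // u ≠ v}, φ c (p u) = φ c' (p u) → c u = c' u := by
      intro u hpu
      have h1 := hmem c _ (p u) rfl
      have hk := hd u.1
      have hdu := hpdist u
      rw [show k - G.dist v (p u) = k - G.dist v u.1 + 1 by omega] at h1
      apply (hy (k - G.dist v u.1) (φ c (p u)) (by omega) h1).2
      have h2 := hedge _ _ (hpadj u)
      rw [hφu c u, hφu c' u, ← hpu] at h2
      exact h2
    have heq : ∀ n u, G.dist v u = n → φ c u = φ c' u := by
      intro n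
      induction n with
      | zero =>
        intro u hu
        obtain rfl := hG.dist_eq_zero_iff.1 hu
        rw [hφv, hφv]
      | succ n ih =>
        intro u hu
        have huv : u ≠ v := by
          rintro rfl
          simp at hu
        have h1 := ih (p ⟨u, huv⟩) (by have := hpdist ⟨u, huv⟩; simp only at this; omega)
        have h2 := hφu c ⟨u, huv⟩
        have h3 := hφu c' ⟨u, huv⟩
        simp only at h2 h3
        rw [h2, h3, h1, key _ h1]
    funext u
    exact key u (heq _ _ rfl)
  have hcardc : (Set.univ : Set ({u : V // u ≠ v} → Fin D)).ncard = D ^ (Fintype.card V - 1) := by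
    rw [Set.ncard_univ, Nat.card_eq_fintype_card, Fintype.card_fun, Fintype.card_fin]
    congr 1
    simp [Fintype.card_subtype_compl]
  rw [← hcardc]
  refine Set.ncard_le_ncard_of_injOn _ (fun c _ => ?_) hinj.injOn ?_
  · exact ⟨φ c, hφv c, fun u _ => hAE _ (Nat.sub_le _ _) (hmem c _ u rfl), rfl⟩
  · have hfin : {ψ : V → F × F | ∀ u, ψ u ∈ insert x E}.Finite := by
      simpa [Set.pi] using Set.Finite.pi (fun _ : V => (insert x E).finite_toSet)
    refine (hfin.image (fun ψ (e : G.edgeSet) => edgeLengths ψ e.1)).subset ?_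
    rintro _ ⟨ψ, hv, hu, rfl⟩
    refine ⟨ψ, fun u => ?_, rfl⟩
    by_cases h : u = v
    · rw [h, hv]
      exact Finset.mem_insert_self _ _
    · exact Finset.mem_insert_of_mem (hu u h)

/-! ### The chain of rich sets and the conclusion -/

/-- **Theorem 1.3 (trees over arbitrary fields).** Let `𝔽` be a field and `K ≥ 4` a constant
such that every finite `A ⊆ 𝔽²` (with `|A| ≤ char(𝔽)^(4/3)` when `char(𝔽) > 0`) satisfies
`𝒯*(A) ≤ K|A|^(7/3)`. Let `T` be a tree with `k ≥ 1` edges and `v` a vertex of `T`. Let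
`E ⊆ 𝔽²` be a finite set with `|E|` sufficiently large (and `|E| ≤ char(𝔽)^(4/3)` when
`char(𝔽) > 0`), such that every isotropic line contains at most
`M = 4⁻¹ (16K)^{-(k-1)} (⌊|E|/8⌋)^{(2/3)^(k-1)}` points of `E`. Then there are a constant
`c(k) > 0` (independent of `E`) and a subset `E' ⊆ E` with `|E'| ≥ c(k) |E|^((2/3)^k)` such
that for every `x ∈ E'` the number of distinct trees `(T', x)` with vertices in `E` isomorphic
to `(T, v)` is at least `c(k) |E|^(2k/3)`. -/
theorem tree_arbitrary_field (𝓕 : Type) [Field 𝓕] (K : ℝ) (hK : 4 ≤ K)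
    (hTri : ∀ A : Finset (𝓕 × 𝓕),
      (0 < ringChar 𝓕 → (A.card : ℝ) ≤ (ringChar 𝓕 : ℝ) ^ ((4 : ℝ) / 3)) →
        (tripleCount (A : Set (𝓕 × 𝓕)) ↑A ↑A : ℝ) ≤ K * (A.card : ℝ) ^ ((7 : ℝ) / 3)) :
    ∀ k : ℕ, 1 ≤ k → ∃ c : ℝ, 0 < c ∧ ∃ N : ℕ,
      ∀ (V : Type) [Fintype V] (G : SimpleGraph V) (v : V),
        G.IsTree → G.edgeSet.ncard = k →
          ∀ E : Finset (𝓕 × 𝓕),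
            N ≤ E.card →
            (0 < ringChar 𝓕 → (E.card : ℝ) ≤ (ringChar 𝓕 : ℝ) ^ ((4 : ℝ) / 3)) →
            (∀ ℓ : Set (𝓕 × 𝓕), IsIsotropicLine ℓ →
              ((↑E ∩ ℓ).ncard : ℝ) ≤
                4⁻¹ * ((16 * K) ^ (k - 1))⁻¹
                  * ((E.card / 8 : ℕ) : ℝ) ^ (((2 : ℝ) / 3) ^ (k - 1))) →
              ∃ E' ⊆ E, c * (E.card : ℝ) ^ (((2 : ℝ) / 3) ^ k) ≤ (E'.card : ℝ) ∧
                ∀ x ∈ E', c * (E.card : ℝ) ^ (2 * (k : ℝ) / 3) ≤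
                  (treeCount G v x (↑E) : ℝ) := by
  classical
  intro k hk
  -- `c₁ |E|^(2/3)` distances are seen by each point of the chain at every step.
  set c₁ : ℝ := (((2 : ℝ) ^ k)⁻¹) ^ ((2 : ℝ) / 3) / (12 * K) with hc₁
  have hc₁pos : 0 < c₁ := by positivity
  refine ⟨min ((2 : ℝ) ^ k)⁻¹ (c₁ ^ k), by positivity, 8 * 2 ^ k, ?_⟩
  intro V _ G v hG hedge E hN hchar hiso
  have hk2 : 1 ≤ 2 ^ k := Nat.one_le_two_pow
  have hE1 : (1 : ℝ) ≤ E.card := by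
    have : 1 ≤ E.card := by omega
    exact_mod_cast this
  have h2 : (2 : 𝓕) ≠ 0 := by
    refine Ring.two_ne_zero fun h => ?_
    -- In characteristic `2` the size bound would give `|E| ≤ 2^(4/3) < 4`.
    have h1 := hchar (by omega)
    rw [h] at h1
    have h3 : ((2 : ℕ) : ℝ) ^ ((4 : ℝ) / 3) ≤ ((2 : ℕ) : ℝ) ^ (2 : ℝ) :=
      Real.rpow_le_rpow_of_exponent_le (by norm_num) (by norm_num)
    have h4 : (8 : ℝ) ≤ E.card := by
      have : 8 ≤ E.card := by omega
      exact_mod_cast this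
    norm_num at h3
    norm_num at h1
    linarith
  set M : ℝ := 4⁻¹ * ((16 * K) ^ (k - 1))⁻¹ *
    ((E.card / 8 : ℕ) : ℝ) ^ (((2 : ℝ) / 3) ^ (k - 1)) with hM
  have hM0 : 0 ≤ M := by positivity
  have hME : 32 * 2 ^ (k - 1) * M ≤ E.card := by
    have h1 : 1 ≤ E.card / 8 := by omega
    have h1' : (1 : ℝ) ≤ ((E.card / 8 : ℕ) : ℝ) := by exact_mod_cast h1
    have h3 : ((E.card / 8 : ℕ) : ℝ) ^ (((2 : ℝ) / 3) ^ (k - 1)) ≤ (E.card : ℝ) / 8 := by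
      calc ((E.card / 8 : ℕ) : ℝ) ^ (((2 : ℝ) / 3) ^ (k - 1))
          ≤ ((E.card / 8 : ℕ) : ℝ) ^ (1 : ℝ) :=
            Real.rpow_le_rpow_of_exponent_le h1' (pow_le_one₀ (by norm_num) (by norm_num))
        _ = ((E.card / 8 : ℕ) : ℝ) := Real.rpow_one _
        _ ≤ (E.card : ℝ) / 8 := by exact_mod_cast Nat.cast_div_le
    have h4 : (2 : ℝ) ^ (k - 1) * ((16 * K) ^ (k - 1))⁻¹ ≤ 1 := by
      rw [← div_eq_mul_inv]
      exact div_le_one_of_le₀ (pow_le_pow_left₀ (by norm_num) (by linarith) _) (by positivity)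
    calc 32 * 2 ^ (k - 1) * M
        = 8 * ((2 : ℝ) ^ (k - 1) * ((16 * K) ^ (k - 1))⁻¹) *
            ((E.card / 8 : ℕ) : ℝ) ^ (((2 : ℝ) / 3) ^ (k - 1)) := by rw [hM]; ring
      _ ≤ 8 * 1 * ((E.card : ℝ) / 8) := by gcongr
      _ = E.card := by ring
  have hstep : ∀ A : Finset (𝓕 × 𝓕), ∃ A' : Finset (𝓕 × 𝓕), A ⊆ E →
      E.card ≤ 2 ^ (k - 1) * A.card → A' ⊆ A ∧ A.card ≤ 2 * A'.card ∧ ∀ a ∈ A',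
        (A.card : ℝ) ^ ((2 : ℝ) / 3) ≤ 12 * K * ((A.image (fdist a)).card : ℝ) := by
    intro A
    by_cases h : A ⊆ E ∧ E.card ≤ 2 ^ (k - 1) * A.card
    · obtain ⟨hAE, hcard⟩ := h
      have hpow : 2 ^ k = 2 * 2 ^ (k - 1) := by rw [← pow_succ']; congr 1; omega
      have hA4 : 4 ≤ A.card := by
        have : 2 ^ (k - 1) * 4 ≤ 2 ^ (k - 1) * A.card := by omega
        exact Nat.le_of_mul_le_mul_left this (by positivity)
      have hAle : (A.card : ℝ) ≤ E.card := by exact_mod_cast Finset.card_le_card hAE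
      have hMA : 8 * M ≤ A.card := by
        have h1 : (E.card : ℝ) ≤ 2 ^ (k - 1) * A.card := by exact_mod_cast hcard
        have h3 : (2 : ℝ) ^ (k - 1) * (32 * M) ≤ 2 ^ (k - 1) * A.card := by linarith
        have h4 := le_of_mul_le_mul_left h3 (by positivity)
        linarith
      obtain ⟨A', h1, h3, h4⟩ := exists_half_rich h2 hK A hA4
        (hTri A fun h => hAle.trans (hchar h)) hM0 hMA (fun ℓ hℓ => by
          refine le_trans ?_ (hiso ℓ hℓ)
          exact_mod_cast Set.ncard_le_ncard (Set.inter_subset_inter_left ℓ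
            (Finset.coe_subset.2 hAE)) (E.finite_toSet.inter_of_left ℓ))
      exact ⟨A', fun _ _ => ⟨h1, h3, h4⟩⟩
    · exact ⟨∅, fun h1 h3 => absurd ⟨h1, h3⟩ h⟩
  choose g hg using hstep
  set A : ℕ → Finset (𝓕 × 𝓕) := fun j => g^[j] E with hAdef
  have hAsucc : ∀ j, A (j + 1) = g (A j) := fun j => Function.iterate_succ_apply' g j E
  have hA : ∀ j ≤ k, A j ⊆ E ∧ E.card ≤ 2 ^ j * (A j).card := by
    intro j
    induction j with
    | zero => intro _; simp [hAdef]
    | succ j ih =>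
      intro hj
      obtain ⟨h1, h3⟩ := ih (by omega)
      obtain ⟨h4, h5, -⟩ := hg (A j) h1
        (h3.trans (Nat.mul_le_mul_right _ (Nat.pow_le_pow_right (by norm_num) (by omega))))
      rw [← hAsucc] at h4 h5
      refine ⟨h4.trans h1, h3.trans ?_⟩
      rw [pow_succ, mul_assoc]
      exact Nat.mul_le_mul_left _ h5
  have hlow : ∀ j ≤ k, ((2 : ℝ) ^ k)⁻¹ * E.card ≤ ((A j).card : ℝ) := by
    intro j hj
    rw [inv_mul_le_iff₀ (by positivity)]
    exact_mod_cast (hA j hj).2.trans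
      (Nat.mul_le_mul_right _ (Nat.pow_le_pow_right (by norm_num) hj))
  set D : ℕ := ⌈c₁ * (E.card : ℝ) ^ ((2 : ℝ) / 3)⌉₊ with hD
  have hrich : ∀ j < k, ∀ a ∈ A (j + 1), D ≤ ((A j).image (fdist a)).card := by
    intro j hj a ha
    obtain ⟨h1, h3⟩ := hA j hj.le
    rw [hAsucc] at ha
    have h4 := (hg (A j) h1 (h3.trans (Nat.mul_le_mul_right _
      (Nat.pow_le_pow_right (by norm_num) (by omega))))).2.2 a ha
    refine Nat.ceil_le.2 ?_
    have h5 : (((2 : ℝ) ^ k)⁻¹ * E.card) ^ ((2 : ℝ) / 3) ≤ ((A j).card : ℝ) ^ ((2 : ℝ) / 3) :=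
      Real.rpow_le_rpow (by positivity) (hlow j hj.le) (by norm_num)
    rw [Real.mul_rpow (by positivity) (by positivity)] at h5
    rw [hc₁, div_mul_eq_mul_div, div_le_iff₀ (by positivity)]
    linarith
  have hcardV : Fintype.card V = k + 1 := by
    rw [← hG.card_edgeFinset, ← hedge, ← SimpleGraph.coe_edgeFinset, Set.ncard_coe_finset]
  have hdist : ∀ u, G.dist v u ≤ k := by
    intro u
    obtain ⟨w, hw, hl⟩ := hG.connected.exists_path_of_dist v u
    have := hw.length_lt
    omega
  refine ⟨A k, (hA k le_rfl).1, ?_, fun x hx => ?_⟩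
  · calc min ((2 : ℝ) ^ k)⁻¹ (c₁ ^ k) * (E.card : ℝ) ^ (((2 : ℝ) / 3) ^ k)
        ≤ ((2 : ℝ) ^ k)⁻¹ * (E.card : ℝ) ^ (1 : ℝ) := by
          gcongr
          · exact min_le_left _ _
          · exact pow_le_one₀ (by norm_num) (by norm_num)
      _ = ((2 : ℝ) ^ k)⁻¹ * E.card := by rw [Real.rpow_one]
      _ ≤ ((A k).card : ℝ) := hlow k le_rfl
  · have h1 := pow_le_treeCount G hG.connected v k hdist E A (fun j hj => (hA j hj).1) D hrich x hx
    rw [hcardV, Nat.add_sub_cancel] at h1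
    calc min ((2 : ℝ) ^ k)⁻¹ (c₁ ^ k) * (E.card : ℝ) ^ (2 * (k : ℝ) / 3)
        ≤ c₁ ^ k * (E.card : ℝ) ^ (2 * (k : ℝ) / 3) := by
          gcongr
          exact min_le_right _ _
      _ = (c₁ * (E.card : ℝ) ^ ((2 : ℝ) / 3)) ^ k := by
          rw [mul_pow, ← Real.rpow_mul_natCast (by positivity)]
          congr 2
          ring
      _ ≤ (D : ℝ) ^ k := by
          gcongr
          exact Nat.le_ceil _
      _ ≤ (treeCount G v x (↑E) : ℝ) := by exact_mod_cast h1
end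

section
/- Let p be an odd prime and let E ⊆ 𝔽_p². Then the bisector energy Q(E), defined as the number of quadruples (a,b,c,d) ∈ E⁴ with ‖a−b‖ ≠ 0, ‖c−d‖ ≠ 0, and B(a,b) = B(c,d), satisfies Q(E) ≤ 4|E|⁴/p² + 10p|E|². -/
namespace BisectorEnergy

open Finset

variable {p : ℕ} [Fact p.Prime]

/-! ### Notions -/

/-- The standard bilinear form on the plane. -/
def dot (a u : ZMod p × ZMod p) : ZMod p := a.1 * u.1 + a.2 * u.2

/-- The `2 × 2` determinant; it vanishes exactly when the two vectors are parallel. -/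
def crs (a u : ZMod p × ZMod p) : ZMod p := a.1 * u.2 - a.2 * u.1

/-- The point `u + t • Ju`, where `Ju = (u₂, -u₁)`. -/
def pt (u : ZMod p × ZMod p) (t : ZMod p) : ZMod p × ZMod p :=
  (u.1 + t * u.2, u.2 - t * u.1)

/-- The anisotropic vectors. -/
def W (p : ℕ) [Fact p.Prime] : Finset (ZMod p × ZMod p) := univ.filter fun u => dot u u ≠ 0

/-- The pairs of points of `E` whose difference is parallel to `u`. -/
def P (E : Finset (ZMod p × ZMod p)) (u : ZMod p × ZMod p) :
    Finset ((ZMod p × ZMod p) × (ZMod p × ZMod p)) :=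
  (E ×ˢ E).filter fun x => crs (x.1 - x.2) u = 0

/-- The standard primitive additive character of `𝔽_p`. -/
noncomputable def ψ : AddChar (ZMod p) ℂ := ZMod.stdAddChar

/-- The Fourier transform of the indicator function of `E`. -/
noncomputable def ft (E : Finset (ZMod p × ZMod p)) (ξ : ZMod p × ZMod p) : ℂ :=
  ∑ a ∈ E, ψ (dot a ξ)

/-- The exponential sum of `(a + b) · u` over the pairs `(a, b)` with `a - b` parallel to `u`. -/
noncomputable def G (E : Finset (ZMod p × ZMod p)) (u : ZMod p × ZMod p) : ℂ :=
  ∑ x ∈ P E u, ψ (dot (x.1 + x.2) u)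

/-! ### Fourier analysis on the plane -/

lemma sum_ψ (z : ZMod p) : ∑ k : ZMod p, ψ (k * z) = if z = 0 then (p : ℂ) else 0 := by
  have h := AddChar.sum_mulShift (R := ZMod p) (R' := ℂ) z (ψ := ψ)
    (ZMod.isPrimitive_stdAddChar p)
  rw [h, ZMod.card]
  split_ifs <;> simp

lemma normSq_sum {ι : Type*} (S : Finset ι) (g : ι → ZMod p) :
    ((‖∑ x ∈ S, ψ (g x)‖ ^ 2 : ℝ) : ℂ) = ∑ x ∈ S, ∑ y ∈ S, ψ (g x - g y) := by
  push_cast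
  rw [← Complex.mul_conj', map_sum, sum_mul_sum]
  refine sum_congr rfl fun x _ => sum_congr rfl fun y _ => ?_
  rw [sub_eq_add_neg, AddChar.map_add_eq_mul, AddChar.map_neg_eq_conj]

/-- Orthogonality of characters, used to count the coincidences `g x = g y`. -/
lemma card_coincidence {ι : Type*} (S : Finset ι) (g : ι → ZMod p) :
    (p : ℝ) * #((S ×ˢ S).filter fun x => g x.1 = g x.2) =
      ∑ k : ZMod p, ‖∑ x ∈ S, ψ (k * g x)‖ ^ 2 := by
  have : ((∑ k : ZMod p, ‖∑ x ∈ S, ψ (k * g x)‖ ^ 2 : ℝ) : ℂ) =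
      (((p : ℝ) * #((S ×ˢ S).filter fun x => g x.1 = g x.2) : ℝ) : ℂ) := by
    rw [Complex.ofReal_sum]
    simp_rw [normSq_sum S, ← mul_sub]
    rw [sum_comm]
    have h : ∀ x ∈ S, ∑ k : ZMod p, ∑ y ∈ S, ψ (k * (g x - g y)) =
        ∑ y ∈ S, (p : ℂ) * if g x = g y then 1 else 0 := by
      intro x _
      rw [sum_comm]
      simp [sum_ψ, sub_eq_zero]
    rw [sum_congr rfl h, card_filter, sum_product]
    push_cast
    simp_rw [mul_sum]
    refine sum_congr rfl fun x _ => sum_congr rfl fun y _ => ?_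
    split_ifs <;> simp
  exact_mod_cast this.symm

lemma sum_ψ_dot (z : ZMod p × ZMod p) :
    ∑ ξ : ZMod p × ZMod p, ψ (dot z ξ) = if z = 0 then (p : ℂ) ^ 2 else 0 := by
  rw [Fintype.sum_prod_type]
  simp only [dot, AddChar.map_add_eq_mul]
  rw [← sum_mul_sum]
  simp_rw [mul_comm z.1, mul_comm z.2, sum_ψ, Prod.ext_iff]
  by_cases h1 : z.1 = 0 <;> by_cases h2 : z.2 = 0 <;> simp [h1, h2, sq]

lemma parseval (E : Finset (ZMod p × ZMod p)) :
    ∑ ξ : ZMod p × ZMod p, ‖ft E ξ‖ ^ 2 = (p : ℝ) ^ 2 * #E := by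
  have : ((∑ ξ : ZMod p × ZMod p, ‖ft E ξ‖ ^ 2 : ℝ) : ℂ) = (((p : ℝ) ^ 2 * #E : ℝ) : ℂ) := by
    rw [Complex.ofReal_sum]
    simp only [ft]
    simp_rw [normSq_sum E]
    have h : ∀ ξ a b : ZMod p × ZMod p, dot a ξ - dot b ξ = dot (a - b) ξ := by
      intro ξ a b; simp only [dot, Prod.fst_sub, Prod.snd_sub]; ring
    simp_rw [h]
    rw [sum_comm]
    simp_rw [sum_comm (s := univ) (t := E), sum_ψ_dot, sub_eq_zero]
    simp [mul_comm]
  exact_mod_cast this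

lemma G_eq (E : Finset (ZMod p × ZMod p)) (u : ZMod p × ZMod p) :
    (p : ℂ) * G E u = ∑ t : ZMod p, ft E (pt u t) * ft E (pt u (-t)) := by
  have h : ∀ (a b : ZMod p × ZMod p) (t : ZMod p),
      ψ (dot a (pt u t)) * ψ (dot b (pt u (-t))) =
        ψ (dot (a + b) u) * ψ (t * crs (a - b) u) := by
    intro a b t
    rw [← AddChar.map_add_eq_mul, ← AddChar.map_add_eq_mul]
    congr 1
    simp only [dot, crs, pt, Prod.fst_sub, Prod.snd_sub, Prod.fst_add, Prod.snd_add]; ring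
  simp_rw [ft, sum_mul_sum, h]
  rw [sum_comm]
  simp_rw [sum_comm (s := univ) (t := E), ← mul_sum, sum_ψ]
  rw [G, P, sum_filter, sum_product, mul_sum]
  refine sum_congr rfl fun a _ => ?_
  rw [mul_sum]
  refine sum_congr rfl fun b _ => ?_
  split_ifs <;> ring

/-! ### The exponential sums `G` -/

/-- The pair of frequencies on a line determines the foot `u` of the perpendicular from the origin,
and the two positions on the line. -/
lemma pt_inj {u v : ZMod p × ZMod p} {t s t' s' : ZMod p} (hu : dot u u ≠ 0) (hv : dot v v ≠ 0)
    (ht : t ≠ t') (hs : s ≠ s') (h1 : pt u t = pt v s) (h2 : pt u t' = pt v s') :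
    u = v ∧ t = s ∧ t' = s' := by
  obtain ⟨u1, u2⟩ := u
  obtain ⟨v1, v2⟩ := v
  simp only [pt, dot, Prod.mk.injEq] at *
  obtain ⟨h1a, h1b⟩ := h1
  obtain ⟨h2a, h2b⟩ := h2
  have ht0 : t - t' ≠ 0 := sub_ne_zero.2 ht
  have hs0 : s - s' ≠ 0 := sub_ne_zero.2 hs
  -- Both `u` and `v` are proportional to the normal of the common line.
  have e1 : (t - t') * u2 = (s - s') * v2 := by linear_combination h1a - h2a
  have e2 : (t - t') * u1 = (s - s') * v1 := by linear_combination h2b - h1b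
  -- Pairing `t - t'` times the first point with `u`, and `s - s'` times it with `v`, agrees by the
  -- previous two identities; the squared lengths of `z - z'` agree as well, forcing `t - t' = s - s'`.
  have e3 : (t - t') * (u1 * u1 + u2 * u2) = (s - s') * (v1 * v1 + v2 * v2) := by
    linear_combination (t - t') * u1 * h1a + (t - t') * u2 * h1b
      + (v1 + s * v2) * e2 + (v2 - s * v1) * e1
  have e4 : (t - t') * (t - t') * (u1 * u1 + u2 * u2) =
      (s - s') * (s - s') * (v1 * v1 + v2 * v2) := by
    linear_combination ((t - t') * u2 + (s - s') * v2) * e1 + ((t - t') * u1 + (s - s') * v1) * e2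
  have e5 : t - t' = s - s' := by
    have : (s - s') * (v1 * v1 + v2 * v2) * ((t - t') - (s - s')) = 0 := by
      linear_combination e4 - (t - t') * e3
    rcases mul_eq_zero.1 this with h | h
    · exact absurd h (mul_ne_zero hs0 hv)
    · exact sub_eq_zero.1 h
  rw [e5] at e1 e2
  have f2 := mul_left_cancel₀ hs0 e1
  have f1 := mul_left_cancel₀ hs0 e2
  subst f1 f2
  have g : t = s := by
    have : (t - s) * (u1 * u1 + u2 * u2) = 0 := by linear_combination u2 * h1a - u1 * h1b
    rcases mul_eq_zero.1 this with h | h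
    · exact sub_eq_zero.1 h
    · exact absurd h hu
  exact ⟨⟨rfl, rfl⟩, g, by linear_combination g - e5⟩

/-- A pair of mutually symmetric frequencies determines their midpoint `u` and the position. -/
lemma pt_symm_inj (h2 : (2 : ZMod p) ≠ 0) {u v : ZMod p × ZMod p} {t s : ZMod p}
    (hu : dot u u ≠ 0) (ha : pt u t = pt v s) (hb : pt u (-t) = pt v (-s)) :
    u = v ∧ t = s := by
  obtain ⟨u1, u2⟩ := u
  obtain ⟨v1, v2⟩ := v
  simp only [pt, dot, Prod.mk.injEq] at *
  obtain ⟨h1a, h1b⟩ := ha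
  obtain ⟨h2a, h2b⟩ := hb
  have f1 : u1 = v1 := mul_left_cancel₀ h2 (by linear_combination h1a + h2a)
  have f2 : u2 = v2 := mul_left_cancel₀ h2 (by linear_combination h1b + h2b)
  subst f1 f2
  have : (t - s) * (u1 * u1 + u2 * u2) = 0 := by linear_combination u2 * h1a - u1 * h1b
  rcases mul_eq_zero.1 this with h | h
  · exact ⟨⟨rfl, rfl⟩, sub_eq_zero.1 h⟩
  · exact absurd h hu

lemma sum_comp_le {ι κ : Type*} [Fintype κ] (S : Finset ι) (φ : ι → κ)
    (hφ : Set.InjOn φ S) (h : κ → ℝ) (h0 : ∀ x, 0 ≤ h x) :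
    ∑ x ∈ S, h (φ x) ≤ ∑ y, h y := by
  classical
  rw [← sum_image hφ]
  exact sum_le_univ_sum_of_nonneg h0

lemma sum_prod_H (H : ZMod p × ZMod p → ℝ) :
    ∑ y : (ZMod p × ZMod p) × (ZMod p × ZMod p), H y.1 * H y.2 = (∑ ξ, H ξ) ^ 2 := by
  rw [Fintype.sum_prod_type, sq, sum_mul_sum]

lemma sum_G_le (h2 : (2 : ZMod p) ≠ 0) (E : Finset (ZMod p × ZMod p)) :
    ∑ u ∈ W p, ‖G E u‖ ^ 2 ≤ 2 * (p : ℝ) ^ 2 * (#E : ℝ) ^ 2 := by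
  have hp : (0 : ℝ) < p := by exact_mod_cast (Fact.out : p.Prime).pos
  set H : ZMod p × ZMod p → ℝ := fun ξ => ‖ft E ξ‖ ^ 2 with hH
  have H0 : ∀ ξ, 0 ≤ H ξ := fun ξ => by positivity
  -- The off-diagonal index set of the expansion of `∑ |p G(u)|²`.
  set D := (W p ×ˢ (univ : Finset (ZMod p × ZMod p))).filter fun x => x.2.1 ≠ x.2.2 with hD
  have memD : ∀ x ∈ D, dot x.1 x.1 ≠ 0 ∧ x.2.1 ≠ x.2.2 := by
    intro x hx; simpa [hD, W] using hx
  have b1 : ∑ x ∈ D, H (pt x.1 x.2.1) * H (pt x.1 x.2.2) ≤ (∑ ξ, H ξ) ^ 2 := by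
    rw [← sum_prod_H]
    refine sum_comp_le D (fun x => (pt x.1 x.2.1, pt x.1 x.2.2)) ?_ (fun y => H y.1 * H y.2)
      fun y => mul_nonneg (H0 _) (H0 _)
    rintro ⟨u, t, t'⟩ hx ⟨v, s, s'⟩ hy h
    have hx := memD _ hx
    have hy := memD _ hy
    simp only [Prod.mk.injEq] at h hx hy ⊢
    exact pt_inj hx.1 hy.1 hx.2 hy.2 h.1 h.2
  have b2 : ∑ x ∈ D, H (pt x.1 (-x.2.1)) * H (pt x.1 (-x.2.2)) ≤ (∑ ξ, H ξ) ^ 2 := by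
    rw [← sum_prod_H]
    refine sum_comp_le D (fun x => (pt x.1 (-x.2.1), pt x.1 (-x.2.2))) ?_
      (fun y => H y.1 * H y.2) fun y => mul_nonneg (H0 _) (H0 _)
    rintro ⟨u, t, t'⟩ hx ⟨v, s, s'⟩ hy h
    have hx := memD _ hx
    have hy := memD _ hy
    simp only [Prod.mk.injEq] at h hx hy ⊢
    have := pt_inj hx.1 hy.1 (neg_injective.ne hx.2) (neg_injective.ne hy.2) h.1 h.2
    simpa using this
  have b3 : ∑ x ∈ W p ×ˢ (univ : Finset (ZMod p)), H (pt x.1 x.2) * H (pt x.1 (-x.2)) ≤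
      (∑ ξ, H ξ) ^ 2 := by
    rw [← sum_prod_H]
    refine sum_comp_le (W p ×ˢ (univ : Finset (ZMod p)))
      (fun x => (pt x.1 x.2, pt x.1 (-x.2))) ?_
      (fun y => H y.1 * H y.2) fun y => mul_nonneg (H0 _) (H0 _)
    rintro ⟨u, t⟩ hx ⟨v, s⟩ hy h
    simp only [Prod.mk.injEq] at h ⊢
    have hx' : dot u u ≠ 0 := by simpa [W] using hx
    exact pt_symm_inj h2 hx' h.1 h.2
  set X : ZMod p × ZMod p → ZMod p → ℝ := fun u t => ‖ft E (pt u t)‖ * ‖ft E (pt u (-t))‖ with hX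
  have c1 : ∀ u, (p : ℝ) ^ 2 * ‖G E u‖ ^ 2 ≤ ∑ x : ZMod p × ZMod p, X u x.1 * X u x.2 := by
    intro u
    have : (p : ℝ) * ‖G E u‖ ≤ ∑ t, X u t := by
      have h := congrArg norm (G_eq E u)
      rw [norm_mul, Complex.norm_natCast] at h
      rw [h]
      refine (norm_sum_le _ _).trans (le_of_eq ?_)
      simp [hX]
    calc (p : ℝ) ^ 2 * ‖G E u‖ ^ 2 = ((p : ℝ) * ‖G E u‖) ^ 2 := by ring
      _ ≤ (∑ t, X u t) ^ 2 := by gcongr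
      _ = _ := by rw [sq, sum_mul_sum, Fintype.sum_prod_type]
  have c2 : (p : ℝ) ^ 2 * ∑ u ∈ W p, ‖G E u‖ ^ 2 ≤
      ∑ x ∈ W p ×ˢ (univ : Finset (ZMod p × ZMod p)), X x.1 x.2.1 * X x.1 x.2.2 := by
    rw [mul_sum, sum_product]
    exact sum_le_sum fun u _ => c1 u
  have c3 : ∑ x ∈ D, X x.1 x.2.1 * X x.1 x.2.2 ≤ (∑ ξ, H ξ) ^ 2 := by
    have : ∑ x ∈ D, X x.1 x.2.1 * X x.1 x.2.2 ≤
        ∑ x ∈ D, (H (pt x.1 x.2.1) * H (pt x.1 x.2.2) +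
          H (pt x.1 (-x.2.1)) * H (pt x.1 (-x.2.2))) / 2 := by
      refine sum_le_sum fun x _ => ?_
      simp only [hX, hH]
      nlinarith [sq_nonneg (‖ft E (pt x.1 x.2.1)‖ * ‖ft E (pt x.1 x.2.2)‖ -
        ‖ft E (pt x.1 (-x.2.1))‖ * ‖ft E (pt x.1 (-x.2.2))‖)]
    rw [← sum_div, sum_add_distrib] at this
    linarith
  have c4 : ∑ x ∈ (W p ×ˢ (univ : Finset (ZMod p × ZMod p))).filter (fun x => ¬ x.2.1 ≠ x.2.2),
      X x.1 x.2.1 * X x.1 x.2.2 ≤ (∑ ξ, H ξ) ^ 2 := by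
    refine le_trans (le_of_eq ?_) b3
    rw [sum_filter, sum_product, sum_product]
    refine sum_congr rfl fun u _ => ?_
    rw [Fintype.sum_prod_type]
    refine sum_congr rfl fun t _ => ?_
    simp only [not_not, sum_ite_eq, mem_univ, if_true, hX, hH]
    ring
  have c5 := sum_filter_add_sum_filter_not (W p ×ˢ (univ : Finset (ZMod p × ZMod p)))
    (fun x => x.2.1 ≠ x.2.2) (fun x => X x.1 x.2.1 * X x.1 x.2.2)
  have c6 : ∑ ξ, H ξ = (p : ℝ) ^ 2 * #E := parseval E
  rw [c6] at c3 c4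
  have : (p : ℝ) ^ 2 * ∑ u ∈ W p, ‖G E u‖ ^ 2 ≤
      (p : ℝ) ^ 2 * (2 * (p : ℝ) ^ 2 * (#E : ℝ) ^ 2) := by
    rw [← c5] at c2
    calc _ ≤ _ := c2
      _ ≤ _ := add_le_add c3 c4
      _ = _ := by ring
  exact le_of_mul_le_mul_left this (by positivity)

/-! ### Pairs with parallel difference -/

lemma crs_sub (a b u : ZMod p × ZMod p) : crs (a - b) u = crs a u - crs b u := by
  simp only [crs, Prod.fst_sub, Prod.snd_sub]; ring

/-- Cauchy–Schwarz over the `p` lines parallel to `u`. -/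
lemma le_card_P (E : Finset (ZMod p × ZMod p)) (u : ZMod p × ZMod p) :
    (#E : ℝ) ^ 2 ≤ p * #(P E u) := by
  have h1 : #E = ∑ y : ZMod p, #(E.filter fun a => crs a u = y) :=
    card_eq_sum_card_fiberwise fun a _ => mem_univ _
  have h2 : #(P E u) = ∑ y : ZMod p, #(E.filter fun a => crs a u = y) ^ 2 := by
    rw [card_eq_sum_card_fiberwise (f := fun x => crs x.1 u) (t := univ) fun a _ => mem_univ _]
    refine sum_congr rfl fun y _ => ?_
    rw [sq, ← card_product]
    congr 1
    ext x
    simp only [P, mem_filter, mem_product, crs_sub, sub_eq_zero]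
    constructor
    · rintro ⟨⟨⟨h1, h2⟩, h3⟩, h4⟩
      exact ⟨⟨h1, h4⟩, h2, h3 ▸ h4⟩
    · rintro ⟨⟨h1, h2⟩, h3, h4⟩
      exact ⟨⟨⟨h1, h3⟩, h2.trans h4.symm⟩, h2⟩
  have := sq_sum_le_card_mul_sum_sq (s := (univ : Finset (ZMod p)))
    (f := fun y => (#(E.filter fun a => crs a u = y) : ℝ))
  rw [card_univ, ZMod.card] at this
  rw [h2, h1]
  exact_mod_cast this

lemma card_line_le (u : ZMod p × ZMod p) (hu : u ≠ 0) (y : ZMod p) :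
    #(univ.filter fun b : ZMod p × ZMod p => crs b u = y) ≤ p := by
  by_cases h : u.2 = 0
  · have h1 : u.1 ≠ 0 := fun h1 => hu (Prod.ext h1 h)
    calc _ ≤ #(univ : Finset (ZMod p)) := by
          refine card_le_card_of_injOn (fun b => b.1) (fun _ _ => mem_coe.2 (mem_univ _)) ?_
          intro b hb c hc hbc
          simp only [mem_coe, mem_filter, mem_univ, true_and] at hb hc hbc
          simp only [crs] at hb hc
          refine Prod.ext hbc (mul_right_cancel₀ h1 ?_)
          linear_combination hc - hb + u.2 * hbc
      _ = p := by simp [ZMod.card]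
  · calc _ ≤ #(univ : Finset (ZMod p)) := by
          refine card_le_card_of_injOn (fun b => b.2) (fun _ _ => mem_coe.2 (mem_univ _)) ?_
          intro b hb c hc hbc
          simp only [mem_coe, mem_filter, mem_univ, true_and] at hb hc hbc
          simp only [crs] at hb hc
          refine Prod.ext (mul_right_cancel₀ h ?_) hbc
          linear_combination hb - hc + u.1 * hbc
      _ = p := by simp [ZMod.card]

lemma card_P_le (E : Finset (ZMod p × ZMod p)) (u : ZMod p × ZMod p) (hu : u ≠ 0) :
    #(P E u) ≤ p * #E := by
  rw [P, card_filter, sum_product, mul_comm]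
  refine sum_le_card_nsmul _ _ _ fun a _ => ?_
  rw [← card_filter]
  refine le_trans (card_le_card ?_) (card_line_le u hu (crs a u))
  intro b hb
  simp only [mem_filter, crs_sub, sub_eq_zero, mem_univ, true_and] at hb ⊢
  exact hb.2.symm

lemma card_parallel_le (z : ZMod p × ZMod p) (hz : z ≠ 0) :
    #(univ.filter fun u : ZMod p × ZMod p => u ≠ 0 ∧ crs z u = 0) ≤ p - 1 := by
  have h1 := card_line_le z hz 0
  have h2 : (univ.filter fun u : ZMod p × ZMod p => u ≠ 0 ∧ crs z u = 0) =
      (univ.filter fun u : ZMod p × ZMod p => crs u z = 0).erase 0 := by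
    ext u
    simp only [mem_filter, mem_univ, true_and, mem_erase]
    have : crs z u = - crs u z := by simp only [crs]; ring
    rw [this, neg_eq_zero]
  rw [h2, card_erase_of_mem (by simp only [mem_filter, mem_univ, true_and]; simp [crs])]
  omega

lemma sum_card_le (E : Finset (ZMod p × ZMod p)) :
    (∑ u ∈ univ.filter (fun u : ZMod p × ZMod p => u ≠ 0), #(P E u) : ℝ) ≤
      (p - 1) * (p * #E + (#E : ℝ) ^ 2) := by
  have hp := (Fact.out : p.Prime).one_le
  have hc : #(univ.filter fun u : ZMod p × ZMod p => u ≠ 0) = p ^ 2 - 1 := by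
    rw [filter_ne' univ (0 : ZMod p × ZMod p), card_erase_of_mem (mem_univ _), card_univ,
      Fintype.card_prod, ZMod.card, sq]
  have key : (∑ u ∈ univ.filter (fun u : ZMod p × ZMod p => u ≠ 0), #(P E u) : ℝ) =
      ∑ a ∈ E, ∑ b ∈ E,
        (#(univ.filter fun u : ZMod p × ZMod p => u ≠ 0 ∧ crs (a - b) u = 0) : ℝ) := by
    have hP : ∀ u, (#(P E u) : ℝ) =
        ∑ a ∈ E, ∑ b ∈ E, if crs (a - b) u = 0 then (1 : ℝ) else 0 := by
      intro u
      rw [P, card_filter, sum_product]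
      push_cast
      rfl
    simp_rw [hP]
    rw [sum_comm]
    refine sum_congr rfl fun a _ => ?_
    rw [sum_comm]
    refine sum_congr rfl fun b _ => ?_
    rw [← filter_filter, card_filter]
    push_cast
    rfl
  rw [key]
  have bd : ∀ a ∈ E, ∀ b ∈ E,
      (#(univ.filter fun u : ZMod p × ZMod p => u ≠ 0 ∧ crs (a - b) u = 0) : ℝ) ≤
        (p - 1) + if a = b then (p : ℝ) * (p - 1) else 0 := by
    intro a _ b _
    split_ifs with h
    · subst h
      have : (univ.filter fun u : ZMod p × ZMod p => u ≠ 0 ∧ crs (a - a) u = 0) =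
          univ.filter fun u : ZMod p × ZMod p => u ≠ 0 := by
        refine filter_congr fun u _ => ?_
        simp [crs]
      rw [this, hc, Nat.cast_sub (Nat.one_le_pow _ _ hp)]
      push_cast
      exact le_of_eq (by ring)
    · have := card_parallel_le (a - b) (sub_ne_zero.2 h)
      have h' : ((p - 1 : ℕ) : ℝ) = p - 1 := by rw [Nat.cast_sub hp]; simp
      rw [add_zero, ← h']
      exact_mod_cast this
  refine (sum_le_sum fun a ha => sum_le_sum fun b hb => bd a ha b hb).trans (le_of_eq ?_)
  simp only [sum_add_distrib, sum_const, nsmul_eq_mul, sum_ite_eq, sum_ite_mem, inter_self]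
  ring

lemma sum_card_sq_le (E : Finset (ZMod p × ZMod p)) :
    (∑ u ∈ W p, (#(P E u) : ℝ) ^ 2) ≤
      (p - 1) * ((#E : ℝ) ^ 4 / p + p ^ 2 * (#E : ℝ) ^ 2) := by
  have hp1 := (Fact.out : p.Prime).one_le
  have hp : (0 : ℝ) < p := by exact_mod_cast (Fact.out : p.Prime).pos
  have hc : #(univ.filter fun u : ZMod p × ZMod p => u ≠ 0) = p ^ 2 - 1 := by
    rw [filter_ne' univ (0 : ZMod p × ZMod p), card_erase_of_mem (mem_univ _), card_univ,
      Fintype.card_prod, ZMod.card, sq]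
  have hcr : (#(univ.filter fun u : ZMod p × ZMod p => u ≠ 0) : ℝ) = p ^ 2 - 1 := by
    rw [hc, Nat.cast_sub (Nat.one_le_pow _ _ hp1)]; simp
  set n : ℝ := (#E : ℝ) with hn
  have hn0 : 0 ≤ n := by positivity
  have s1 : W p ⊆ univ.filter fun u : ZMod p × ZMod p => u ≠ 0 := by
    intro u hu
    simp only [W, mem_filter, mem_univ, true_and] at hu ⊢
    rintro rfl
    exact hu (by simp [dot])
  calc (∑ u ∈ W p, (#(P E u) : ℝ) ^ 2)
      ≤ ∑ u ∈ univ.filter (fun u : ZMod p × ZMod p => u ≠ 0), (#(P E u) : ℝ) ^ 2 :=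
        sum_le_sum_of_subset_of_nonneg s1 fun _ _ _ => by positivity
    _ ≤ ∑ u ∈ univ.filter (fun u : ZMod p × ZMod p => u ≠ 0),
          ((n ^ 2 / p + p * n) * #(P E u) - n ^ 3) := by
        refine sum_le_sum fun u hu => ?_
        have hu : u ≠ 0 := by simpa using hu
        have l1 : n ^ 2 / p ≤ #(P E u) := by
          rw [div_le_iff₀ hp, mul_comm]; exact le_card_P E u
        have l2 : (#(P E u) : ℝ) ≤ p * n := by
          rw [hn]; exact_mod_cast card_P_le E u hu
        have l3 : n ^ 3 = n ^ 2 / p * (p * n) := by field_simp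
        rw [l3]
        nlinarith [mul_nonneg (sub_nonneg.2 l1) (sub_nonneg.2 l2)]
    _ = (n ^ 2 / p + p * n) *
          ∑ u ∈ univ.filter (fun u : ZMod p × ZMod p => u ≠ 0), (#(P E u) : ℝ) -
          (p ^ 2 - 1) * n ^ 3 := by
        rw [sum_sub_distrib, ← mul_sum, sum_const, nsmul_eq_mul, hcr]
    _ ≤ (n ^ 2 / p + p * n) * ((p - 1) * (p * n + n ^ 2)) - (p ^ 2 - 1) * n ^ 3 := by
        gcongr
        exact sum_card_le E
    _ = _ := by field_simp; ring

/-! ### From bisectors to exponential sums -/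

/-- Quadruples whose first and last pairs lie in `P E u` and have the same value of
`(a + b) · u`. -/
def K (E : Finset (ZMod p × ZMod p)) (u : ZMod p × ZMod p) :
    Finset (((ZMod p × ZMod p) × (ZMod p × ZMod p)) ×
      ((ZMod p × ZMod p) × (ZMod p × ZMod p))) :=
  (P E u ×ˢ P E u).filter fun x => dot (x.1.1 + x.1.2) u = dot (x.2.1 + x.2.2) u

lemma sum_K_le (h2 : (2 : ZMod p) ≠ 0) (E : Finset (ZMod p × ZMod p)) :
    (p : ℝ) * ∑ u ∈ W p, (#(K E u) : ℝ) ≤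
      (p - 1) * ((#E : ℝ) ^ 4 / p + p ^ 2 * (#E : ℝ) ^ 2) +
      (p - 1) * (2 * (p : ℝ) ^ 2 * (#E : ℝ) ^ 2) := by
  have hp1 := (Fact.out : p.Prime).one_le
  have hp1r : (0 : ℝ) ≤ p - 1 := sub_nonneg.2 (by exact_mod_cast hp1)
  have k0 : ∀ u, ‖∑ x ∈ P E u, ψ ((0 : ZMod p) * dot (x.1 + x.2) u)‖ ^ 2 =
      (#(P E u) : ℝ) ^ 2 := by
    intro u; simp
  have kk : ∀ k : ZMod p, k ≠ 0 → ∀ u,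
      ∑ x ∈ P E u, ψ (k * dot (x.1 + x.2) u) = G E (k • u) := by
    intro k hk u
    have hP : P E (k • u) = P E u := by
      refine filter_congr fun x _ => ?_
      have : crs (x.1 - x.2) (k • u) = k * crs (x.1 - x.2) u := by
        simp only [crs, Prod.smul_fst, Prod.smul_snd, smul_eq_mul]; ring
      rw [this, mul_eq_zero, or_iff_right hk]
    rw [G, hP]
    refine sum_congr rfl fun x _ => ?_
    congr 1
    simp only [dot, Prod.smul_fst, Prod.smul_snd, smul_eq_mul]; ring
  have hW : ∀ k : ZMod p, k ≠ 0 →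
      ∑ u ∈ W p, ‖G E (k • u)‖ ^ 2 = ∑ u ∈ W p, ‖G E u‖ ^ 2 := by
    intro k hk
    have hdot : ∀ (c : ZMod p) (u : ZMod p × ZMod p), dot (c • u) (c • u) = c * c * dot u u := by
      intro c u
      simp only [dot, Prod.smul_fst, Prod.smul_snd, smul_eq_mul]; ring
    refine sum_nbij' (fun u => k • u) (fun u => k⁻¹ • u) ?_ ?_ ?_ ?_ fun _ _ => rfl
    · intro u hu
      simp only [W, mem_filter, mem_univ, true_and, hdot] at hu ⊢
      exact mul_ne_zero (mul_ne_zero hk hk) hu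
    · intro u hu
      simp only [W, mem_filter, mem_univ, true_and, hdot] at hu ⊢
      exact mul_ne_zero (mul_ne_zero (inv_ne_zero hk) (inv_ne_zero hk)) hu
    · intro u _
      exact inv_smul_smul₀ hk u
    · intro u _
      exact smul_inv_smul₀ hk u
  have e : (p : ℝ) * ∑ u ∈ W p, (#(K E u) : ℝ) =
      ∑ u ∈ W p, (#(P E u) : ℝ) ^ 2 + (p - 1) * ∑ u ∈ W p, ‖G E u‖ ^ 2 := by
    rw [mul_sum]
    have : ∀ u, (p : ℝ) * #(K E u) =
        ∑ k : ZMod p, ‖∑ x ∈ P E u, ψ (k * dot (x.1 + x.2) u)‖ ^ 2 := fun u =>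
      card_coincidence (P E u) fun x => dot (x.1 + x.2) u
    simp_rw [this]
    rw [sum_comm, ← add_sum_erase univ _ (mem_univ (0 : ZMod p))]
    simp_rw [k0]
    congr 1
    rw [sum_congr rfl (g := fun _ => ∑ u ∈ W p, ‖G E u‖ ^ 2)]
    · rw [sum_const, card_erase_of_mem (mem_univ _), card_univ, ZMod.card, nsmul_eq_mul,
        Nat.cast_sub hp1, Nat.cast_one]
    · intro k hk
      have hk := ne_of_mem_erase hk
      simp_rw [kk k hk]
      exact hW k hk
  rw [e]
  exact add_le_add (sum_card_sq_le E) (mul_le_mul_of_nonneg_left (sum_G_le h2 E) hp1r)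

/-- Every nonzero multiple `u` of `a - b` sees the equality of the bisectors `B(a, b) = B(c, d)`.
This follows by testing on the midpoints of both pairs and on one more point of `B(a, b)`. -/
lemma bisector_eq (h2 : (2 : ZMod p) ≠ 0) {a b c d : ZMod p × ZMod p}
    (h : bisector a b = bisector c d) (l : ZMod p) :
    crs (a - b) (l • (a - b)) = 0 ∧ crs (c - d) (l • (a - b)) = 0 ∧
      dot (a + b) (l • (a - b)) = dot (c + d) (l • (a - b)) := by
  obtain ⟨a1, a2⟩ := a
  obtain ⟨b1, b2⟩ := b
  obtain ⟨c1, c2⟩ := c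
  obtain ⟨d1, d2⟩ := d
  have hi : (2 : ZMod p) * 2⁻¹ = 1 := mul_inv_cancel₀ h2
  set i : ZMod p := 2⁻¹
  have m1 : (i * (a1 + b1), i * (a2 + b2)) ∈ bisector (c1, c2) (d1, d2) := by
    rw [← h]
    simp only [bisector, fdist, Set.mem_ofPred_eq]
    linear_combination (-(a1 + b1) * (a1 - b1) - (a2 + b2) * (a2 - b2)) * hi
  have m2 : (i * (a1 + b1) + (a2 - b2), i * (a2 + b2) - (a1 - b1)) ∈
      bisector (c1, c2) (d1, d2) := by
    rw [← h]
    simp only [bisector, fdist, Set.mem_ofPred_eq]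
    linear_combination (-(a1 + b1) * (a1 - b1) - (a2 + b2) * (a2 - b2)) * hi
  have m3 : (i * (c1 + d1), i * (c2 + d2)) ∈ bisector (a1, a2) (b1, b2) := by
    rw [h]
    simp only [bisector, fdist, Set.mem_ofPred_eq]
    linear_combination (-(c1 + d1) * (c1 - d1) - (c2 + d2) * (c2 - d2)) * hi
  simp only [bisector, fdist, Set.mem_ofPred_eq] at m1 m2 m3
  simp only [crs, dot, Prod.fst_sub, Prod.snd_sub, Prod.fst_add, Prod.snd_add, Prod.smul_fst,
    Prod.smul_snd, smul_eq_mul]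
  refine ⟨by ring, ?_, ?_⟩
  · refine mul_left_cancel₀ h2 ?_
    linear_combination l * (m1 - m2)
  · linear_combination l * m3 +
      l * ((c1 + d1) * (a1 - b1) + (c2 + d2) * (a2 - b2)) * hi

lemma energy_le_sum_K (h2 : (2 : ZMod p) ≠ 0) (E : Finset (ZMod p × ZMod p)) :
    ((p : ℝ) - 1) * bisectorEnergy (E : Set (ZMod p × ZMod p)) ≤ ∑ u ∈ W p, (#(K E u) : ℝ) := by
  classical
  have hp1 := (Fact.out : p.Prime).one_le
  set S := {q : (ZMod p × ZMod p) × (ZMod p × ZMod p) × (ZMod p × ZMod p) × (ZMod p × ZMod p) |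
    q.1 ∈ (E : Set _) ∧ q.2.1 ∈ (E : Set _) ∧ q.2.2.1 ∈ (E : Set _) ∧ q.2.2.2 ∈ (E : Set _) ∧
    fdist q.1 q.2.1 ≠ 0 ∧ fdist q.2.2.1 q.2.2.2 ≠ 0 ∧
    bisector q.1 q.2.1 = bisector q.2.2.1 q.2.2.2} with hS
  have hQ : bisectorEnergy (E : Set (ZMod p × ZMod p)) = #S.toFinset := by
    rw [bisectorEnergy, Set.ncard_eq_toFinset_card']
  have key : #(((univ : Finset (ZMod p)).erase 0) ×ˢ S.toFinset) ≤ #((W p).sigma fun u => K E u) := by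
    refine card_le_card_of_injOn
      (fun x => ⟨x.1 • (x.2.1 - x.2.2.1), ((x.2.1, x.2.2.1), (x.2.2.2.1, x.2.2.2.2))⟩) ?_ ?_
    · rintro ⟨l, a, b, c, d⟩ hx
      simp only [coe_product, Set.mem_prod, coe_erase, Set.coe_toFinset, hS, Set.mem_ofPred_eq,
        coe_univ, Set.mem_sdiff, Set.mem_univ, true_and, Set.mem_singleton_iff, mem_coe] at hx
      obtain ⟨hl, ha, hb, hc, hd, hab, -, hB⟩ := hx
      obtain ⟨r1, r2, r3⟩ := bisector_eq h2 hB l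
      simp only [mem_coe, mem_sigma, K, P, mem_filter, mem_product, W, mem_univ, true_and]
      refine ⟨?_, ⟨⟨⟨ha, hb⟩, r1⟩, ⟨hc, hd⟩, r2⟩, r3⟩
      have : dot (l • (a - b)) (l • (a - b)) = l * l * fdist a b := by
        simp only [dot, fdist, Prod.smul_fst, Prod.smul_snd, smul_eq_mul, Prod.fst_sub,
          Prod.snd_sub]
        ring
      rw [this]
      exact mul_ne_zero (mul_ne_zero hl hl) hab
    · rintro ⟨l, a, b, c, d⟩ hx ⟨l', a', b', c', d'⟩ hy h
      simp only [Sigma.mk.injEq, heq_eq_eq, Prod.mk.injEq] at h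
      obtain ⟨hl, ⟨rfl, rfl⟩, rfl, rfl⟩ := h
      simp only [coe_product, Set.mem_prod, coe_erase, Set.coe_toFinset, hS, Set.mem_ofPred_eq] at hx
      have hab : a - b ≠ 0 := by
        intro h0
        apply hx.2.2.2.2.2.1
        rw [sub_eq_zero.1 h0]
        simp [fdist]
      rw [smul_left_injective (ZMod p) hab hl]
  rw [card_product, card_sigma, card_erase_of_mem (mem_univ _), card_univ, ZMod.card, ← hQ] at key
  have key' : (((p - 1) * bisectorEnergy (E : Set (ZMod p × ZMod p)) : ℕ) : ℝ) ≤
      ((∑ u ∈ W p, #(K E u) : ℕ) : ℝ) := by exact_mod_cast key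
  rw [Nat.cast_mul, Nat.cast_sub hp1, Nat.cast_sum, Nat.cast_one] at key'
  exact key'

end BisectorEnergy

open BisectorEnergy in
/-- **Bisector energy bound (after Hanson–Lund–Roche-Newton).** Let `p` be an odd prime and
`E ⊆ 𝔽_p²`. Then the bisector energy `Q(E)`, the number of quadruples `(a,b,c,d) ∈ E⁴` with
`‖a-b‖ ≠ 0`, `‖c-d‖ ≠ 0` and `B(a,b) = B(c,d)`, satisfies
`Q(E) ≤ 4|E|⁴/p² + 10 p |E|²`. -/
theorem bisector_energy_bound (p : ℕ) (hp : p.Prime) (hodd : Odd p)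
    (E : Finset (ZMod p × ZMod p)) :
    (bisectorEnergy (E : Set (ZMod p × ZMod p)) : ℝ) ≤
      4 * (E.card : ℝ) ^ 4 / (p : ℝ) ^ 2 + 10 * (p : ℝ) * (E.card : ℝ) ^ 2 := by
  have : Fact p.Prime := ⟨hp⟩
  have h2 : (2 : ZMod p) ≠ 0 := by
    intro h
    have : p ∣ 2 := (ZMod.natCast_eq_zero_iff 2 p).1 (by exact_mod_cast h)
    have := (Nat.prime_dvd_prime_iff_eq hp Nat.prime_two).1 this
    subst this
    exact absurd hodd (by decide)
  have hp0 : (0 : ℝ) < p := by exact_mod_cast hp.pos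
  have hp1 : (0 : ℝ) < p - 1 := sub_pos.2 (by exact_mod_cast hp.one_lt)
  have h3 := mul_le_mul_of_nonneg_left (energy_le_sum_K h2 E) hp0.le
  have h4 := h3.trans (sum_K_le h2 E)
  set n : ℝ := (E.card : ℝ)
  set Q : ℝ := (bisectorEnergy (E : Set (ZMod p × ZMod p)) : ℝ)
  have h5 : Q ≤ n ^ 4 / (p : ℝ) ^ 2 + 3 * p * n ^ 2 := by
    refine le_of_mul_le_mul_left (a := (p : ℝ) * (p - 1)) ?_ (by positivity)
    calc (p : ℝ) * (p - 1) * Q = p * ((p - 1) * Q) := by ring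
      _ ≤ _ := h4
      _ = _ := by field_simp; ring
  have h6 : 0 ≤ n ^ 4 / (p : ℝ) ^ 2 := by positivity
  have h7 : 0 ≤ (p : ℝ) * n ^ 2 := by positivity
  have h8 : 4 * n ^ 4 / (p : ℝ) ^ 2 = 4 * (n ^ 4 / (p : ℝ) ^ 2) := by ring
  rw [h8]
  linarith
end

section
/- Let p be an odd prime and let E, F ⊆ 𝔽_p². Then the number 𝒯*(F,E,E) of triples (a,b,c) ∈ F×E×E with ‖a−b‖ = ‖a−c‖ and ‖b−c‖ ≠ 0 satisfies 𝒯*(F,E,E) ≤ |F||E|²/p + p^{1/2}|F|^{1/2}·(4|E|⁴/p² + 10p|E|²)^{1/2}. -/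
/-! ### Linear reflections of the plane and exponential sums -/

section Fourier
open Finset
open scoped ComplexConjugate

variable {p : ℕ} [Fact p.Prime]

/-- The linear map with matrix `[[τ₁, τ₂], [τ₂, -τ₁]]`. It is an orthogonal reflection when
`τ₁² + τ₂² = 1`, and every reflection in a non-isotropic line through `0` has this form. -/
def mir (τ x : ZMod p × ZMod p) : ZMod p × ZMod p :=
  (τ.1 * x.1 + τ.2 * x.2, τ.2 * x.1 - τ.1 * x.2)

/-- The parameters `τ` for which `mir τ` is an orthogonal reflection. -/
def conic (p : ℕ) [Fact p.Prime] : Finset (ZMod p × ZMod p) :=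
  univ.filter fun τ => τ.1 ^ 2 + τ.2 ^ 2 = 1

lemma mir_sub (τ x y : ZMod p × ZMod p) : mir τ (x - y) = mir τ x - mir τ y := by
  ext <;> simp [mir] <;> ring

lemma mir_mir {τ : ZMod p × ZMod p} (h : τ ∈ conic p) (x : ZMod p × ZMod p) :
    mir τ (mir τ x) = x := by
  have h : τ.1 ^ 2 + τ.2 ^ 2 = 1 := by simpa [conic] using h
  ext
  · simp only [mir]; linear_combination x.1 * h
  · simp only [mir]; linear_combination x.2 * h

/-- A linear reflection is determined by the image of one nonzero vector, isotropic or not: if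
`(u, v)` is the difference of the parameters, then `u² + v² = 0`, so `(u, v)` is orthogonal to `τ`
by the equation of the conic, which forces `u = v = 0`. -/
lemma mir_left_inj (hp2 : (2 : ZMod p) ≠ 0) {σ τ x : ZMod p × ZMod p} (hσ : σ ∈ conic p)
    (hτ : τ ∈ conic p) (hx : x ≠ 0) (h : mir σ x = mir τ x) : σ = τ := by
  have hσ : σ.1 ^ 2 + σ.2 ^ 2 = 1 := by simpa [conic] using hσ
  have hτ : τ.1 ^ 2 + τ.2 ^ 2 = 1 := by simpa [conic] using hτ
  have h1 := congrArg Prod.fst h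
  have h2 := congrArg Prod.snd h
  simp only [mir] at h1 h2
  obtain ⟨a, b⟩ := σ
  obtain ⟨c, d⟩ := τ
  obtain ⟨x, y⟩ := x
  simp only at hσ hτ h1 h2
  have key : (a - c) ^ 2 + (b - d) ^ 2 = 0 := by
    by_contra hne
    apply hx
    have e1 : ((a - c) ^ 2 + (b - d) ^ 2) * x = 0 := by
      linear_combination (a - c) * h1 + (b - d) * h2
    have e2 : ((a - c) ^ 2 + (b - d) ^ 2) * y = 0 := by
      linear_combination (b - d) * h1 - (a - c) * h2
    simp [(mul_eq_zero.1 e1).resolve_left hne, (mul_eq_zero.1 e2).resolve_left hne]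
  have k1 : c * (a - c) + d * (b - d) = 0 := by
    have : (2 : ZMod p) * (c * (a - c) + d * (b - d)) = 0 := by
      linear_combination hσ - hτ - key
    exact (mul_eq_zero.1 this).resolve_left hp2
  have k2 : c * (b - d) - d * (a - c) = 0 := by
    have : (c * (b - d) - d * (a - c)) ^ 2 = 0 := by
      linear_combination (c ^ 2 + d ^ 2) * key - (c * (a - c) + d * (b - d)) * k1
    exact pow_eq_zero_iff (two_ne_zero) |>.1 this
  ext
  · simp only; linear_combination c * k1 - d * k2 - (a - c) * hτ
  · simp only; linear_combination d * k1 + c * k2 - (b - d) * hτ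

lemma card_conic_le : (conic p).card ≤ 2 * p := by
  have h := Finset.card_le_mul_card_image_of_maps_to (s := conic p) (t := univ) (f := Prod.fst)
    (fun _ _ => mem_univ _) 2 (fun a _ => ?_)
  · simpa [ZMod.card] using h
  by_cases hne : ((conic p).filter fun τ => τ.1 = a).Nonempty
  · obtain ⟨σ, hσ⟩ := hne
    refine (card_le_card (t := {(a, σ.2), (a, -σ.2)}) ?_).trans card_le_two
    intro τ hτ
    simp only [conic, mem_filter, mem_univ, true_and, mem_insert, mem_singleton] at hσ hτ ⊢
    obtain ⟨h1, rfl⟩ := hτ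
    obtain ⟨h2, h3⟩ := hσ
    have : τ.2 ^ 2 = σ.2 ^ 2 := by rw [h3] at h2; linear_combination h1 - h2
    rcases sq_eq_sq_iff_eq_or_eq_neg.1 this with h | h
    · left; ext <;> simp [h]
    · right; ext <;> simp [h]
  · rw [not_nonempty_iff_eq_empty] at hne
    simp [hne]

/-- The additive character `ψ(x · y)` of the plane, with `ψ` the standard character of `ZMod p`. -/
noncomputable def chr (x y : ZMod p × ZMod p) : ℂ :=
  ZMod.stdAddChar (x.1 * y.1 + x.2 * y.2)

lemma chr_comm (x y : ZMod p × ZMod p) : chr x y = chr y x := by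
  simp only [chr, mul_comm]

lemma chr_add_left (x u y : ZMod p × ZMod p) : chr (x + u) y = chr x y * chr u y := by
  simp only [chr, ← AddChar.map_add_eq_mul]
  congr 1
  simp; ring

lemma conj_chr (x y : ZMod p × ZMod p) : conj (chr x y) = chr (-x) y := by
  simp only [chr, ← AddChar.map_neg_eq_conj]
  congr 1
  simp; ring

/-- Linear reflections are self-adjoint for the dot product. -/
lemma chr_mir (τ x y : ZMod p × ZMod p) : chr x (mir τ y) = chr (mir τ x) y := by
  simp only [chr, mir]
  congr 1
  ring

lemma sum_chr (y : ZMod p × ZMod p) :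
    ∑ x, chr x y = if y = 0 then (p : ℂ) ^ 2 else 0 := by
  have h1 (t : ZMod p) : ∑ s, ZMod.stdAddChar (s * t) = if t = 0 then (p : ℂ) else 0 := by
    rw [AddChar.sum_mulShift t (ZMod.isPrimitive_stdAddChar p)]
    simp [ZMod.card]
  simp only [Fintype.sum_prod_type, chr, AddChar.map_add_eq_mul, ← mul_sum, ← sum_mul, h1]
  obtain ⟨a, b⟩ := y
  by_cases ha : a = 0 <;> by_cases hb : b = 0 <;> simp [ha, hb, sq]

/-- The exponential sum `∑ a ∈ E, ψ(a · η)`, the (unnormalized) Fourier transform of the indicator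
function of `E`. -/
noncomputable def expSum (E : Finset (ZMod p × ZMod p)) (η : ZMod p × ZMod p) : ℂ :=
  ∑ a ∈ E, chr a η

/-- Parseval's identity for the indicator function of `E`. -/
lemma sum_norm_expSum_sq (E : Finset (ZMod p × ZMod p)) :
    ∑ η, ‖expSum E η‖ ^ 2 = (p : ℝ) ^ 2 * E.card := by
  have h : ∑ η, expSum E η * conj (expSum E η) = (p : ℂ) ^ 2 * E.card := by
    simp only [expSum, map_sum, sum_mul_sum, conj_chr, ← chr_add_left]
    rw [sum_comm]
    simp_rw [sum_comm (s := univ) (t := E), chr_comm, sum_chr, ← sub_eq_add_neg, sub_eq_zero]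
    simp [mul_comm]
  simp only [Complex.mul_conj'] at h
  exact_mod_cast h

/-- The number of pairs `(a, b) ∈ E × E` for which `b` is the image of `a` under the affine map
with linear part `mir τ` fixing `x`. -/
noncomputable def mirrorCount (E : Finset (ZMod p × ZMod p)) (τ x : ZMod p × ZMod p) : ℝ :=
  ∑ a ∈ E, ∑ b ∈ E, if b - x = mir τ (a - x) then 1 else 0

/-- Fourier expansion of `x ↦ mirrorCount E τ x`. -/
lemma mirrorCount_eq (E : Finset (ZMod p × ZMod p)) (τ x : ZMod p × ZMod p) :
    (p : ℂ) ^ 2 * (mirrorCount E τ x : ℂ) =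
      ∑ η, expSum E η * conj (expSum E (mir τ η)) * chr (mir τ η - η) x := by
  have h (η : ZMod p × ZMod p) :
      expSum E η * conj (expSum E (mir τ η)) * chr (mir τ η - η) x =
        ∑ a ∈ E, ∑ b ∈ E, chr η ((b - x) - mir τ (a - x)) := by
    simp only [expSum, map_sum]
    rw [sum_mul_sum, sum_comm]
    simp only [sum_mul, conj_chr]
    refine sum_congr rfl fun a _ => sum_congr rfl fun b _ => ?_
    rw [chr_mir, ← chr_add_left, chr_comm _ x]
    have : chr x (mir τ η - η) = chr (mir τ x - x) η := by
      simp only [chr, mir]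
      congr 1
      simp only [Prod.fst_sub, Prod.snd_sub]
      ring
    rw [this, ← chr_add_left, chr_comm η]
    congr 1
    ext <;> simp [mir] <;> ring
  simp_rw [h]
  rw [sum_comm]
  simp_rw [sum_comm (s := univ) (t := E), sum_chr, sub_eq_zero, mirrorCount]
  push_cast
  simp only [mul_sum]
  refine sum_congr rfl fun a _ => sum_congr rfl fun b _ => ?_
  split_ifs <;> simp

/-- Parseval's identity in `x`, followed by the triangle inequality: only the pairs `(η, ζ)` with
`mir τ η - η = mir τ ζ - ζ` survive the summation over `x`. -/
lemma sum_mirrorCount_sq_le (E : Finset (ZMod p × ZMod p)) (τ : ZMod p × ZMod p) :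
    (p : ℝ) ^ 2 * ∑ x, mirrorCount E τ x ^ 2 ≤
      ∑ η, ∑ ζ, if mir τ (η - ζ) = η - ζ then
        ‖expSum E η‖ * ‖expSum E ζ‖ * (‖expSum E (mir τ η)‖ * ‖expSum E (mir τ ζ)‖) else 0 := by
  have hp0 : (0 : ℝ) < p := by exact_mod_cast (Fact.out : p.Prime).pos
  set A : ZMod p × ZMod p → ℂ := fun η => expSum E η * conj (expSum E (mir τ η)) with hA
  have h : (p : ℂ) ^ 4 * ∑ x, (mirrorCount E τ x : ℂ) ^ 2 =
      (p : ℂ) ^ 2 * ∑ η, ∑ ζ, if mir τ (η - ζ) = η - ζ then A η * conj (A ζ) else 0 := by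
    have h1 (x : ZMod p × ZMod p) : (p : ℂ) ^ 4 * (mirrorCount E τ x : ℂ) ^ 2 =
        ∑ η, ∑ ζ, A η * conj (A ζ) * chr x (mir τ (η - ζ) - (η - ζ)) := by
      have : (p : ℂ) ^ 4 * (mirrorCount E τ x : ℂ) ^ 2 =
          ((p : ℂ) ^ 2 * (mirrorCount E τ x : ℂ)) *
            conj ((p : ℂ) ^ 2 * (mirrorCount E τ x : ℂ)) := by
        simp; ring
      rw [this, mirrorCount_eq, map_sum, sum_mul_sum]
      refine sum_congr rfl fun η _ => sum_congr rfl fun ζ _ => ?_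
      rw [map_mul (starRingEnd ℂ) _ (chr _ x), conj_chr, mul_mul_mul_comm, ← chr_add_left,
        chr_comm x, mir_sub]
      congr 2
      abel
    rw [mul_sum]
    simp_rw [h1]
    rw [sum_comm]
    simp_rw [sum_comm (s := univ) (t := univ) (f := fun x ζ => _ * _ * chr x _), ← mul_sum, sum_chr,
      sub_eq_zero, mul_sum]
    refine sum_congr rfl fun η _ => sum_congr rfl fun ζ _ => ?_
    split_ifs <;> simp [mul_comm]
  have h2 := congrArg norm h
  have h3 : ‖(p : ℂ) ^ 4 * ∑ x, (mirrorCount E τ x : ℂ) ^ 2‖ =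
      (p : ℝ) ^ 4 * ∑ x, mirrorCount E τ x ^ 2 := by
    have : (p : ℂ) ^ 4 * ∑ x, (mirrorCount E τ x : ℂ) ^ 2 =
      (((p : ℝ) ^ 4 * ∑ x, mirrorCount E τ x ^ 2 : ℝ) : ℂ) := by push_cast; rfl
    rw [this, Complex.norm_real, Real.norm_of_nonneg]
    positivity
  rw [h3, norm_mul, norm_pow, Complex.norm_natCast] at h2
  have h4 : (p : ℝ) ^ 2 * ((p : ℝ) ^ 2 * ∑ x, mirrorCount E τ x ^ 2) ≤ (p : ℝ) ^ 2 *
      ∑ η, ∑ ζ, if mir τ (η - ζ) = η - ζ then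
        ‖expSum E η‖ * ‖expSum E ζ‖ * (‖expSum E (mir τ η)‖ * ‖expSum E (mir τ ζ)‖) else 0 := by
    rw [← mul_assoc, ← pow_add, h2]
    gcongr
    refine (norm_sum_le _ _).trans (sum_le_sum fun η _ => (norm_sum_le _ _).trans
      (sum_le_sum fun ζ _ => ?_))
    split_ifs
    · simp only [hA, norm_mul, RCLike.norm_conj]
      apply le_of_eq; ring
    · simp
  exact le_of_mul_le_mul_left h4 (by positivity)

set_option maxHeartbeats 400000 in
/-- The Fourier-analytic bound which replaces a bound for the bisector energy of `E`. -/
lemma sum_sum_mirrorCount_sq_le (hp2 : (2 : ZMod p) ≠ 0) (E : Finset (ZMod p × ZMod p)) :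
    ∑ τ ∈ conic p, ∑ x, mirrorCount E τ x ^ 2 ≤
      2 * (E.card : ℝ) ^ 4 / p + 2 * (p : ℝ) ^ 2 * (E.card : ℝ) ^ 2 := by
  have hp0 : (0 : ℝ) < p := by exact_mod_cast (Fact.out : p.Prime).pos
  obtain ⟨n, hn⟩ : ∃ n : ZMod p × ZMod p → ℝ, n = fun η => ‖expSum E η‖ := ⟨_, rfl⟩
  have hS : ∑ η, n η ^ 2 = (p : ℝ) ^ 2 * E.card := by rw [hn]; exact sum_norm_expSum_sq E
  have hS0 : 0 ≤ ∑ η, n η ^ 2 := sum_nonneg fun η _ => sq_nonneg (n η)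
  have hn0 : n 0 = E.card := by simp [hn, expSum, chr]
  -- `mir_left_inj` in summed form: at most one reflection fixes `v`, and `τ ↦ mir τ v` hits each
  -- vector at most once.
  have hfix (v : ZMod p × ZMod p) (hv : v ≠ 0) (c : ℝ) (hc : 0 ≤ c) :
      ∑ τ ∈ conic p, (if mir τ v = v then c else 0) ≤ c := by
    rw [← sum_filter, sum_const, nsmul_eq_mul]
    have : ((conic p).filter fun τ => mir τ v = v).card ≤ 1 := by
      refine card_le_one.2 fun σ hσ τ hτ => ?_
      rw [mem_filter] at hσ hτ
      exact mir_left_inj hp2 hσ.1 hτ.1 hv (hσ.2.trans hτ.2.symm)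
    calc _ ≤ (1 : ℝ) * c := by gcongr; exact_mod_cast this
      _ = c := one_mul c
  have horb (v : ZMod p × ZMod p) (hv : v ≠ 0) :
      ∑ τ ∈ conic p, n (mir τ v) ^ 2 ≤ ∑ η, n η ^ 2 := by
    rw [← sum_image (s := conic p) (g := fun τ => mir τ v) (f := fun w => n w ^ 2)]
    · exact sum_le_sum_of_subset_of_nonneg (subset_univ _) fun _ _ _ => by positivity
    · intro σ hσ τ hτ h
      exact mir_left_inj hp2 hσ hτ hv h
  -- Terms `η = ζ`. The frequency `0`, fixed by every reflection, gives the main term.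
  have hdiag : ∑ τ ∈ conic p, ∑ η, n η ^ 2 * n (mir τ η) ^ 2 ≤
      2 * p * (E.card : ℝ) ^ 4 + (∑ η, n η ^ 2) ^ 2 := by
    rw [sum_comm, ← add_sum_erase _ _ (mem_univ (0 : ZMod p × ZMod p))]
    gcongr ?_ + ?_
    · have h0 (τ : ZMod p × ZMod p) : mir τ 0 = 0 := by ext <;> simp [mir]
      simp only [h0, hn0, sum_const, nsmul_eq_mul]
      have : ((conic p).card : ℝ) ≤ 2 * p := by exact_mod_cast card_conic_le
      calc _ = ((conic p).card : ℝ) * (E.card : ℝ) ^ 4 := by ring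
        _ ≤ _ := by gcongr
    · refine le_trans (sum_le_sum (g := fun η => n η ^ 2 * ∑ ζ, n ζ ^ 2) fun η hη => ?_) ?_
      · rw [← mul_sum]
        exact mul_le_mul_of_nonneg_left (horb η (ne_of_mem_erase hη)) (sq_nonneg _)
      · rw [← sum_mul, sq (∑ η, n η ^ 2)]
        exact mul_le_mul_of_nonneg_right (sum_le_sum_of_subset_of_nonneg (subset_univ _)
          fun _ _ _ => sq_nonneg _) hS0
  -- Terms `η ≠ ζ`: AM-GM splits the product, and the substitution `(η, ζ) ↦ (mir τ η, mir τ ζ)`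
  -- shows that the two halves have equal sums.
  have hoff0 : ∑ τ ∈ conic p, ∑ η, ∑ ζ,
      (if η ≠ ζ ∧ mir τ (η - ζ) = η - ζ then n η ^ 2 * n ζ ^ 2 else 0) ≤
      (∑ η, n η ^ 2) ^ 2 := by
    rw [sum_comm, sq, sum_mul_sum]
    refine sum_le_sum fun η _ => ?_
    rw [sum_comm]
    refine sum_le_sum fun ζ _ => ?_
    by_cases h : η = ζ
    · simp [h]; positivity
    · simp only [ne_eq, h, not_false_eq_true, true_and]
      exact hfix _ (sub_ne_zero.2 h) _ (by positivity)
  have hoff : ∑ τ ∈ conic p, ∑ η, ∑ ζ,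
      (if η ≠ ζ ∧ mir τ (η - ζ) = η - ζ then
        n η * n ζ * (n (mir τ η) * n (mir τ ζ)) else 0) ≤ (∑ η, n η ^ 2) ^ 2 := by
    refine le_trans (sum_le_sum fun τ hτ => ?_) hoff0
    let e : ZMod p × ZMod p ≃ ZMod p × ZMod p := ⟨mir τ, mir τ, mir_mir hτ, mir_mir hτ⟩
    have hsym : ∑ η, ∑ ζ, (if η ≠ ζ ∧ mir τ (η - ζ) = η - ζ then
          n (mir τ η) ^ 2 * n (mir τ ζ) ^ 2 else 0) =
        ∑ η, ∑ ζ, (if η ≠ ζ ∧ mir τ (η - ζ) = η - ζ then n η ^ 2 * n ζ ^ 2 else 0) := by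
      refine Fintype.sum_equiv e _ _ fun η => Fintype.sum_equiv e _ _ fun ζ => ?_
      have h1 : e η = mir τ η := rfl
      have h2 : e ζ = mir τ ζ := rfl
      have h3 : (η ≠ ζ ∧ mir τ (η - ζ) = η - ζ) ↔
          (e η ≠ e ζ ∧ mir τ (e η - e ζ) = e η - e ζ) := by
        rw [e.injective.ne_iff, h1, h2, ← mir_sub, mir_mir hτ]
        exact and_congr_right fun _ => eq_comm
      simp only [h3, h1, h2]
    have hamgm : 2 * ∑ η, ∑ ζ, (if η ≠ ζ ∧ mir τ (η - ζ) = η - ζ then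
        n η * n ζ * (n (mir τ η) * n (mir τ ζ)) else 0) ≤
        ∑ η, ∑ ζ, (if η ≠ ζ ∧ mir τ (η - ζ) = η - ζ then n η ^ 2 * n ζ ^ 2 else 0) +
        ∑ η, ∑ ζ, (if η ≠ ζ ∧ mir τ (η - ζ) = η - ζ then
          n (mir τ η) ^ 2 * n (mir τ ζ) ^ 2 else 0) := by
      simp only [mul_sum, ← sum_add_distrib]
      refine sum_le_sum fun η _ => sum_le_sum fun ζ _ => ?_
      split_ifs
      · nlinarith [sq_nonneg (n η * n ζ - n (mir τ η) * n (mir τ ζ))]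
      · simp
    linarith
  have hsplit : ∑ τ ∈ conic p, (p : ℝ) ^ 2 * ∑ x, mirrorCount E τ x ^ 2 ≤
      (2 * p * (E.card : ℝ) ^ 4 + (∑ η, n η ^ 2) ^ 2) + (∑ η, n η ^ 2) ^ 2 := by
    refine le_trans ?_ (add_le_add hdiag hoff)
    rw [← sum_add_distrib]
    refine sum_le_sum fun τ _ => (sum_mirrorCount_sq_le E τ).trans ?_
    rw [← sum_add_distrib]
    refine sum_le_sum fun η _ => ?_
    have : n η ^ 2 * n (mir τ η) ^ 2 = ∑ ζ, if η = ζ then n η ^ 2 * n (mir τ η) ^ 2 else 0 := by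
      simp
    rw [this, ← sum_add_distrib]
    refine sum_le_sum fun ζ _ => ?_
    by_cases h : η = ζ
    · subst h
      have h0 : mir τ 0 = 0 := by ext <;> simp [mir]
      simp only [sub_self, h0, if_true, ne_eq, not_true_eq_false, false_and, if_false, add_zero]
      apply le_of_eq; simp only [hn]; ring
    · simp [h, hn]
  rw [← mul_sum, hS] at hsplit
  have : (2 * p * (E.card : ℝ) ^ 4 + ((p : ℝ) ^ 2 * E.card) ^ 2) + ((p : ℝ) ^ 2 * E.card) ^ 2 =
      (p : ℝ) ^ 2 * (2 * (E.card : ℝ) ^ 4 / p + 2 * (p : ℝ) ^ 2 * (E.card : ℝ) ^ 2) := by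
    field_simp; ring
  rw [this] at hsplit
  exact le_of_mul_le_mul_left hsplit (by positivity)
end Fourier

/-! ### Bisectors and the second moment -/

section Incidence
open Finset

variable {p : ℕ} [Fact p.Prime]

lemma le_card_bisector (hp2 : (2 : ZMod p) ≠ 0) {a b : ZMod p × ZMod p} (h : fdist a b ≠ 0) :
    p ≤ (univ.filter fun z => fdist z a = fdist z b).card := by
  have hc : (univ : Finset (ZMod p)).card = p := by simp [ZMod.card]
  conv_lhs => rw [← hc]
  -- Move from the midpoint of `a` and `b` in the direction orthogonal to `a - b`.
  refine card_le_card_of_injOn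
    (fun t => ((a.1 + b.1) / 2 - t * (a.2 - b.2), (a.2 + b.2) / 2 + t * (a.1 - b.1))) ?_ ?_
  · intro t _
    rw [mem_coe, mem_filter]
    refine ⟨mem_univ _, ?_⟩
    simp only [fdist]
    field_simp
    ring
  · intro s _ t _ hst
    simp only [Prod.mk.injEq] at hst
    have : fdist a b * (s - t) = 0 := by
      simp only [fdist]
      linear_combination (a.1 - b.1) * hst.2 - (a.2 - b.2) * hst.1
    exact sub_eq_zero.1 ((mul_eq_zero.1 this).resolve_left h)

/-- If the bisectors of `(a, b)` and `(c, d)` share two points, then they are the same line, and for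
any common point `x` the same affine reflection fixing `x` maps `a` to `b` and `c` to `d`. -/
lemma exists_mir (hp2 : (2 : ZMod p) ≠ 0) {a b c d z w x : ZMod p × ZMod p}
    (hab : fdist a b ≠ 0) (hcd : fdist c d ≠ 0) (hzw : z ≠ w)
    (hz : fdist z a = fdist z b) (hzc : fdist z c = fdist z d)
    (hw : fdist w a = fdist w b) (hwc : fdist w c = fdist w d)
    (hx : fdist x a = fdist x b) (hxc : fdist x c = fdist x d) :
    ∃ τ ∈ conic p, b - x = mir τ (a - x) ∧ d - x = mir τ (c - x) := by
  obtain ⟨a1, a2⟩ := a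
  obtain ⟨b1, b2⟩ := b
  obtain ⟨c1, c2⟩ := c
  obtain ⟨d1, d2⟩ := d
  obtain ⟨z1, z2⟩ := z
  obtain ⟨w1, w2⟩ := w
  obtain ⟨x1, x2⟩ := x
  simp only [fdist] at *
  have h1 : (z1 - w1) * (a1 - b1) + (z2 - w2) * (a2 - b2) = 0 := by
    have : (2 : ZMod p) * ((z1 - w1) * (a1 - b1) + (z2 - w2) * (a2 - b2)) = 0 := by
      linear_combination hw - hz
    exact (mul_eq_zero.1 this).resolve_left hp2
  have h2 : (z1 - w1) * (c1 - d1) + (z2 - w2) * (c2 - d2) = 0 := by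
    have : (2 : ZMod p) * ((z1 - w1) * (c1 - d1) + (z2 - w2) * (c2 - d2)) = 0 := by
      linear_combination hwc - hzc
    exact (mul_eq_zero.1 this).resolve_left hp2
  have hcr : (a1 - b1) * (c2 - d2) - (a2 - b2) * (c1 - d1) = 0 := by
    by_contra hne
    apply hzw
    have e1 : ((a1 - b1) * (c2 - d2) - (a2 - b2) * (c1 - d1)) * (z1 - w1) = 0 := by
      linear_combination (c2 - d2) * h1 - (a2 - b2) * h2
    have e2 : ((a1 - b1) * (c2 - d2) - (a2 - b2) * (c1 - d1)) * (z2 - w2) = 0 := by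
      linear_combination (a1 - b1) * h2 - (c1 - d1) * h1
    rw [sub_eq_zero.1 ((mul_eq_zero.1 e1).resolve_left hne),
      sub_eq_zero.1 ((mul_eq_zero.1 e2).resolve_left hne)]
  -- Both `a - b` and `c - d` are orthogonal to `z - w`, so `c - d = k (a - b)`.
  obtain ⟨u1, hu1⟩ : ∃ u, u = a1 - b1 := ⟨_, rfl⟩
  obtain ⟨u2, hu2⟩ : ∃ u, u = a2 - b2 := ⟨_, rfl⟩
  rw [← hu1, ← hu2] at hab hcr
  obtain ⟨k, hk1, hk2⟩ : ∃ k, c1 - d1 = k * u1 ∧ c2 - d2 = k * u2 := by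
    refine ⟨((c1 - d1) * u1 + (c2 - d2) * u2) / (u1 ^ 2 + u2 ^ 2), ?_, ?_⟩
    · field_simp
      linear_combination -u2 * hcr
    · field_simp
      linear_combination u1 * hcr
  have hk : k ≠ 0 := by
    rintro rfl
    apply hcd
    rw [hk1, hk2]; ring
  obtain rfl : b1 = a1 - u1 := by rw [hu1]; ring
  obtain rfl : b2 = a2 - u2 := by rw [hu2]; ring
  obtain rfl : d1 = c1 - k * u1 := by rw [← hk1]; ring
  obtain rfl : d2 = c2 - k * u2 := by rw [← hk2]; ring
  have ha : 2 * ((a1 - x1) * u1 + (a2 - x2) * u2) = u1 ^ 2 + u2 ^ 2 := by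
    linear_combination hx
  have hc : 2 * ((c1 - x1) * u1 + (c2 - x2) * u2) = k * (u1 ^ 2 + u2 ^ 2) := by
    apply mul_left_cancel₀ hk
    linear_combination hxc
  -- The reflection `v ↦ v - 2 (v · u) / (u · u) u` with `u = a - b`.
  refine ⟨((u2 ^ 2 - u1 ^ 2) / (u1 ^ 2 + u2 ^ 2), -(2 * u1 * u2) / (u1 ^ 2 + u2 ^ 2)), ?_, ?_, ?_⟩
  · simp only [conic, mem_filter, mem_univ, true_and]
    field_simp
    ring
  · ext <;> simp only [mir, Prod.fst_sub, Prod.snd_sub] <;> field_simp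
    · linear_combination u1 * ha
    · linear_combination u2 * ha
  · ext <;> simp only [mir, Prod.fst_sub, Prod.snd_sub] <;> field_simp
    · linear_combination u1 * hc
    · linear_combination u2 * hc

lemma card_bisector_inter_le (hp2 : (2 : ZMod p) ≠ 0) {a b c d : ZMod p × ZMod p}
    (hab : fdist a b ≠ 0) (hcd : fdist c d ≠ 0) :
    (∑ z, if fdist z a = fdist z b ∧ fdist z c = fdist z d then (1 : ℝ) else 0) ≤
      1 + ∑ τ ∈ conic p, ∑ x,
        if b - x = mir τ (a - x) ∧ d - x = mir τ (c - x) then (1 : ℝ) else 0 := by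
  set I := univ.filter fun z => fdist z a = fdist z b ∧ fdist z c = fdist z d with hI
  have hI1 : (∑ z, if fdist z a = fdist z b ∧ fdist z c = fdist z d then (1 : ℝ) else 0) =
      I.card := by rw [sum_boole]
  have hnn : 0 ≤ ∑ τ ∈ conic p, ∑ x,
      if b - x = mir τ (a - x) ∧ d - x = mir τ (c - x) then (1 : ℝ) else 0 :=
    sum_nonneg fun _ _ => sum_nonneg fun _ _ => by split_ifs <;> simp
  by_cases h1 : I.card ≤ 1
  · rw [hI1]
    have : (I.card : ℝ) ≤ 1 := by exact_mod_cast h1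
    linarith
  · obtain ⟨z, hz, w, hw, hzw⟩ := one_lt_card.1 (not_le.1 h1)
    simp only [hI, mem_filter, mem_univ, true_and] at hz hw
    refine le_trans ?_ (le_add_of_nonneg_left zero_le_one)
    rw [sum_comm]
    refine sum_le_sum fun x _ => ?_
    split_ifs with hx
    · obtain ⟨τ, hτ, h⟩ := exists_mir hp2 hab hcd hzw hz.1 hz.2 hw.1 hw.2 hx.1 hx.2
      refine le_trans ?_ (single_le_sum (fun σ _ => ?_) hτ)
      · rw [if_pos h]
      · split_ifs <;> simp
    · exact sum_nonneg fun _ _ => by split_ifs <;> simp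

/-- The pairs of points of `E` at nonzero distance. -/
def goodPairs (E : Finset (ZMod p × ZMod p)) : Finset ((ZMod p × ZMod p) × (ZMod p × ZMod p)) :=
  (E ×ˢ E).filter fun q => fdist q.1 q.2 ≠ 0

/-- The number of good pairs of `E` whose bisector contains `z`. -/
noncomputable def apexCount (E : Finset (ZMod p × ZMod p)) (z : ZMod p × ZMod p) : ℝ :=
  ∑ q ∈ goodPairs E, if fdist z q.1 = fdist z q.2 then 1 else 0

lemma tripleCount_eq (E F : Finset (ZMod p × ZMod p)) :
    (tripleCount (F : Set (ZMod p × ZMod p)) ↑E ↑E : ℝ) = ∑ z ∈ F, apexCount E z := by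
  have : {t : (ZMod p × ZMod p) × (ZMod p × ZMod p) × (ZMod p × ZMod p) |
      t.1 ∈ (F : Set (ZMod p × ZMod p)) ∧ t.2.1 ∈ (E : Set (ZMod p × ZMod p)) ∧
      t.2.2 ∈ (E : Set (ZMod p × ZMod p)) ∧
      fdist t.1 t.2.1 = fdist t.1 t.2.2 ∧ fdist t.2.1 t.2.2 ≠ 0} =
      ((F ×ˢ goodPairs E).filter fun t => fdist t.1 t.2.1 = fdist t.1 t.2.2 : Finset _) := by
    ext t
    simp only [goodPairs, Set.mem_ofPred_eq, mem_coe, mem_filter, mem_product]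
    tauto
  rw [tripleCount, this, Set.ncard_coe_finset, ← sum_boole, sum_product]
  rfl

lemma sum_apexCount_ge (hp2 : (2 : ZMod p) ≠ 0) (E : Finset (ZMod p × ZMod p)) :
    (p : ℝ) * (goodPairs E).card ≤ ∑ z, apexCount E z := by
  simp only [apexCount]
  rw [sum_comm, mul_comm, ← nsmul_eq_mul, ← sum_const]
  refine sum_le_sum fun q hq => ?_
  rw [sum_boole]
  exact_mod_cast le_card_bisector hp2 (mem_filter.1 hq).2

lemma sum_apexCount_sq_le (hp2 : (2 : ZMod p) ≠ 0) (E : Finset (ZMod p × ZMod p)) :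
    ∑ z, apexCount E z ^ 2 ≤
      ((goodPairs E).card : ℝ) ^ 2 + ∑ τ ∈ conic p, ∑ x, mirrorCount E τ x ^ 2 := by
  have hm (τ x : ZMod p × ZMod p) : ∑ q ∈ goodPairs E, ∑ r ∈ goodPairs E,
      (if q.2 - x = mir τ (q.1 - x) ∧ r.2 - x = mir τ (r.1 - x) then (1 : ℝ) else 0) ≤
      mirrorCount E τ x ^ 2 := by
    have h1 : ∑ q ∈ goodPairs E, (if q.2 - x = mir τ (q.1 - x) then (1 : ℝ) else 0) ≤
        mirrorCount E τ x := by
      rw [mirrorCount, ← sum_product (s := E) (t := E)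
        (f := fun q => if q.2 - x = mir τ (q.1 - x) then (1 : ℝ) else 0)]
      exact sum_le_sum_of_subset_of_nonneg (filter_subset _ _) fun _ _ _ => by
        split_ifs <;> simp
    have h0 : 0 ≤ ∑ q ∈ goodPairs E, (if q.2 - x = mir τ (q.1 - x) then (1 : ℝ) else 0) :=
      sum_nonneg fun _ _ => by split_ifs <;> simp
    refine le_trans (le_of_eq ?_) (pow_le_pow_left₀ h0 h1 2)
    rw [sq, sum_mul_sum]
    refine sum_congr rfl fun q _ => sum_congr rfl fun r _ => ?_
    simp only [ite_and, mul_ite, mul_one, mul_zero]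
    split_ifs <;> rfl
  calc ∑ z, apexCount E z ^ 2
      = ∑ q ∈ goodPairs E, ∑ r ∈ goodPairs E, ∑ z,
          if fdist z q.1 = fdist z q.2 ∧ fdist z r.1 = fdist z r.2 then (1 : ℝ) else 0 := by
        simp only [apexCount, sq, sum_mul_sum]
        rw [sum_comm]
        refine sum_congr rfl fun q _ => ?_
        rw [sum_comm]
        refine sum_congr rfl fun r _ => sum_congr rfl fun z _ => ?_
        simp only [ite_and, mul_ite, mul_one, mul_zero]
        split_ifs <;> rfl
    _ ≤ ∑ q ∈ goodPairs E, ∑ r ∈ goodPairs E, (1 + ∑ τ ∈ conic p, ∑ x,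
        if q.2 - x = mir τ (q.1 - x) ∧ r.2 - x = mir τ (r.1 - x) then (1 : ℝ) else 0) :=
        sum_le_sum fun q hq => sum_le_sum fun r hr =>
          card_bisector_inter_le hp2 (mem_filter.1 hq).2 (mem_filter.1 hr).2
    _ = ((goodPairs E).card : ℝ) ^ 2 + ∑ τ ∈ conic p, ∑ x,
        ∑ q ∈ goodPairs E, ∑ r ∈ goodPairs E,
        (if q.2 - x = mir τ (q.1 - x) ∧ r.2 - x = mir τ (r.1 - x) then (1 : ℝ) else 0) := by
        simp only [sum_add_distrib, sum_const, nsmul_eq_mul, mul_one]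
        congr 1
        · ring
        · simp_rw [sum_comm (s := goodPairs E) (t := conic p),
            sum_comm (s := goodPairs E) (t := univ)]
    _ ≤ _ := by
        gcongr
        exact hm _ _

end Incidence

theorem isosceles_two_sets_bound (p : ℕ) (hp : p.Prime) (hodd : Odd p)
    (E F : Finset (ZMod p × ZMod p)) :
    (tripleCount (F : Set (ZMod p × ZMod p)) ↑E ↑E : ℝ) ≤
      (F.card : ℝ) * (E.card : ℝ) ^ 2 / p
        + (p : ℝ) ^ ((1 : ℝ) / 2) * (F.card : ℝ) ^ ((1 : ℝ) / 2)
          * (4 * (E.card : ℝ) ^ 4 / (p : ℝ) ^ 2 + 10 * (p : ℝ) * (E.card : ℝ) ^ 2)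
            ^ ((1 : ℝ) / 2) := by
  have : Fact p.Prime := ⟨hp⟩
  have hp0 : (0 : ℝ) < p := by exact_mod_cast hp.pos
  have hp2 : (2 : ZMod p) ≠ 0 := by
    intro h
    have h2 : p ∣ 2 := (ZMod.natCast_eq_zero_iff 2 p).1 (by exact_mod_cast h)
    obtain rfl := (Nat.prime_dvd_prime_iff_eq hp Nat.prime_two).1 h2
    exact absurd hodd (by decide)
  set P : ℝ := ((goodPairs E).card : ℝ) with hP
  have hPE : P ≤ (E.card : ℝ) ^ 2 := by
    have : (goodPairs E).card ≤ E.card ^ 2 := by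
      rw [sq, ← Finset.card_product]
      exact Finset.card_filter_le _ _
    rw [hP]
    exact_mod_cast this
  set Q : ℝ := 4 * (E.card : ℝ) ^ 4 / (p : ℝ) ^ 2 + 10 * (p : ℝ) * (E.card : ℝ) ^ 2 with hQ
  have hvar : ∑ z, (apexCount E z - P / p) ^ 2 ≤ p * Q := by
    have h1 := sum_apexCount_ge hp2 E
    have h2 := sum_apexCount_sq_le hp2 E
    have h3 := sum_sum_mirrorCount_sq_le hp2 E
    have h4 : ∑ z, (apexCount E z - P / p) ^ 2 =
        ∑ z, apexCount E z ^ 2 - 2 * (P / p) * ∑ z, apexCount E z + P ^ 2 := by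
      simp only [sub_sq, Finset.sum_add_distrib, Finset.sum_sub_distrib, Finset.sum_const,
        Finset.card_univ, Fintype.card_prod, ZMod.card, nsmul_eq_mul, Finset.mul_sum]
      congr 1
      · congr 1
        exact Finset.sum_congr rfl fun _ _ => by ring
      · push_cast; field_simp
    -- The cross term only needs a lower bound for the first moment.
    have h5 : 2 * P ^ 2 ≤ 2 * (P / p) * ∑ z, apexCount E z := by
      calc 2 * P ^ 2 = 2 * (P / p) * (p * P) := by field_simp
        _ ≤ _ := by gcongr
    have h6 : p * Q = 4 * (E.card : ℝ) ^ 4 / p + 10 * (p : ℝ) ^ 2 * (E.card : ℝ) ^ 2 := by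
      rw [hQ]; field_simp
    have h7 : 0 ≤ (E.card : ℝ) ^ 4 / p := by positivity
    have h8 : 0 ≤ (p : ℝ) ^ 2 * (E.card : ℝ) ^ 2 := by positivity
    have h9 : 2 * (E.card : ℝ) ^ 4 / p = 2 * ((E.card : ℝ) ^ 4 / p) := by ring
    have h10 : 4 * (E.card : ℝ) ^ 4 / p = 4 * ((E.card : ℝ) ^ 4 / p) := by ring
    linarith
  have hdev : ∑ z ∈ F, (apexCount E z - P / p) ≤ √(p * F.card * Q) := by
    apply Real.le_sqrt_of_sq_le
    calc (∑ z ∈ F, (apexCount E z - P / p)) ^ 2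
        ≤ F.card * ∑ z ∈ F, (apexCount E z - P / p) ^ 2 := sq_sum_le_card_mul_sum_sq
      _ ≤ F.card * ∑ z, (apexCount E z - P / p) ^ 2 := by
          gcongr
          exact Finset.subset_univ F
      _ ≤ F.card * (p * Q) := by gcongr
      _ = p * F.card * Q := by ring
  have hmain : (F.card : ℝ) * (P / p) ≤ (F.card : ℝ) * (E.card : ℝ) ^ 2 / p := by
    rw [mul_div_assoc]; gcongr
  rw [tripleCount_eq, ← Real.sqrt_eq_rpow, ← Real.sqrt_eq_rpow, ← Real.sqrt_eq_rpow,
    ← Real.sqrt_mul hp0.le, ← Real.sqrt_mul (by positivity)]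
  rw [Finset.sum_sub_distrib, Finset.sum_const, nsmul_eq_mul] at hdev
  linarith
end

section
/- Let p be an odd prime and let E, F ⊆ 𝔽_p² with |F| ≥ 8p and |F||E|² ≥ 64p⁴. Then the number 𝒯*(F,E,E) of triples (a,b,c) ∈ F×E×E with ‖a−b‖ = ‖a−c‖ and ‖b−c‖ ≠ 0 satisfies 𝒯*(F,E,E) ≤ 2|F||E|²/p. -/
namespace IsoTri

open Finset ComplexConjugate

variable {p : ℕ} [Fact p.Prime]

/-- The standard bilinear form on the plane `𝔽_p²`. -/
def dot (x y : ZMod p × ZMod p) : ZMod p := x.1 * y.1 + x.2 * y.2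

/-- The reflection of the plane in the line `{x | n · x = s}`; it is meaningful only when
`n · n ≠ 0`. -/
def refl (n : ZMod p × ZMod p) (s : ZMod p) (x : ZMod p × ZMod p) : ZMod p × ZMod p :=
  x - (2 * (dot n x - s) / dot n n) • n

/-- One normal vector for each non-isotropic direction of the plane. -/
def dirs (p : ℕ) [Fact p.Prime] : Finset (ZMod p × ZMod p) :=
  (insert (0, 1) (univ.image fun m : ZMod p => ((1 : ZMod p), m))).filter fun n => dot n n ≠ 0

/-- The unnormalised Fourier transform of the indicator function of `E`. -/
noncomputable def ft (E : Finset (ZMod p × ZMod p)) (ξ : ZMod p × ZMod p) : ℂ :=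
  ∑ x ∈ E, ZMod.stdAddChar (dot ξ x)

/-- The number of points of `E` that stay in `E` under the reflection in `{x | n · x = s}`. -/
def reflCount (E : Finset (ZMod p × ZMod p)) (n : ZMod p × ZMod p) (s : ZMod p) : ℕ :=
  #{q ∈ E ×ˢ E | refl n s q.1 = q.2}

/-- The points of `E` moved by the reflection in `{x | n · x = s}` to another point of `E`, counted
as pairs (point, image): for `n · n ≠ 0` these are the pairs with that line as bisector. -/
def bisCount (E : Finset (ZMod p × ZMod p)) (n : ZMod p × ZMod p) (s : ZMod p) : ℕ :=
  #{q ∈ E ×ˢ E | q.1 ≠ q.2 ∧ refl n s q.1 = q.2}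

/-! ### Directions and reflections -/

lemma dot_self_ne {n : ZMod p × ZMod p} (hn : n ∈ dirs p) : dot n n ≠ 0 :=
  (mem_filter.1 hn).2

lemma card_dirs : #(dirs p) ≤ p + 1 := by
  refine (card_filter_le _ _).trans ((card_insert_le _ _).trans ?_)
  gcongr
  exact card_image_le.trans (by simp [ZMod.card])

/-- A nonzero vector is orthogonal to at most one direction. -/
lemma dirs_eq_of_dot {n n' v : ZMod p × ZMod p} (hn : n ∈ dirs p) (hn' : n' ∈ dirs p)
    (hv : v ≠ 0) (h : dot n v = 0) (h' : dot n' v = 0) : n = n' := by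
  obtain ⟨a, b⟩ := v
  simp only [dirs, mem_filter, mem_insert, mem_image, mem_univ, true_and] at hn hn'
  obtain ⟨rfl | ⟨m, rfl⟩, -⟩ := hn <;> obtain ⟨rfl | ⟨m', rfl⟩, -⟩ := hn' <;>
    simp only [dot, zero_mul, one_mul, zero_add] at h h'
  · rfl
  · exact absurd (by simp_all) hv
  · exact absurd (by simp_all) hv
  · by_cases hb : b = 0
    · exact absurd (by simp_all) hv
    · have : (m - m') * b = 0 := by linear_combination h - h'
      have := (mul_eq_zero.1 this).resolve_right hb
      rw [sub_eq_zero.1 this]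

/-- A nonzero vector is a multiple of at most one direction. -/
lemma dirs_eq_of_smul {n n' v : ZMod p × ZMod p} (hn : n ∈ dirs p) (hn' : n' ∈ dirs p)
    (hv : v ≠ 0) {c c' : ZMod p} (h : v = c • n) (h' : v = c' • n') : n = n' := by
  refine dirs_eq_of_dot (v := (-v.2, v.1)) hn hn' ?_ ?_ ?_
  · intro h0
    apply hv
    rw [Prod.ext_iff] at h0 ⊢
    simp_all
  · rw [h]; simp only [dot, Prod.smul_fst, Prod.smul_snd, smul_eq_mul]; ring
  · rw [h']; simp only [dot, Prod.smul_fst, Prod.smul_snd, smul_eq_mul]; ring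

lemma exists_dirs {v : ZMod p × ZMod p} (hv : dot v v ≠ 0) :
    ∃ n ∈ dirs p, ∃ c : ZMod p, v = c • n := by
  have key : ∃ n ∈ insert (0, 1) (univ.image fun m : ZMod p => ((1 : ZMod p), m)),
      ∃ c : ZMod p, v = c • n := by
    obtain ⟨a, b⟩ := v
    by_cases ha : a = 0
    · exact ⟨(0, 1), by simp, b, by simp [ha]⟩
    · exact ⟨(1, b / a), by simp, a, by simp [mul_div_cancel₀, ha]⟩
  obtain ⟨n, hn, c, rfl⟩ := key
  refine ⟨n, mem_filter.2 ⟨hn, fun h => hv ?_⟩, c, rfl⟩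
  have : dot (c • n) (c • n) = c ^ 2 * dot n n := by
    simp only [dot, Prod.smul_fst, Prod.smul_snd, smul_eq_mul]; ring
  rw [this, h, mul_zero]

lemma dot_refl_zero {n : ZMod p × ZMod p} (hn : dot n n ≠ 0) (x : ZMod p × ZMod p) :
    dot n (refl n 0 x) = - dot n x := by
  have : dot n (refl n 0 x) = dot n x - (2 * dot n x / dot n n) * dot n n := by
    simp only [refl, dot, Prod.fst_sub, Prod.snd_sub, Prod.smul_fst, Prod.smul_snd, smul_eq_mul]
    ring
  rw [this, div_mul_cancel₀ _ hn]; ring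

lemma refl_refl {n : ZMod p × ZMod p} (hn : dot n n ≠ 0) (x : ZMod p × ZMod p) :
    refl n 0 (refl n 0 x) = x := by
  have h := dot_refl_zero hn x
  rw [refl, h, refl]
  ext <;> simp only [Prod.fst_sub, Prod.snd_sub, Prod.smul_fst, Prod.smul_snd, smul_eq_mul] <;> ring

/-- The adjoint relation that turns a reflection in space into a reflection of the frequency. -/
lemma dot_refl (n ξ b : ZMod p × ZMod p) (s : ZMod p) :
    dot ξ (refl n s b) = dot (refl n 0 ξ) b + 2 / dot n n * s * dot n ξ := by
  simp only [refl]
  generalize hN : dot n n = N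
  simp only [dot, Prod.fst_sub, Prod.snd_sub, Prod.smul_fst, Prod.smul_snd, smul_eq_mul]
  ring

/-- Reflections of a nonzero vector in different directions are different. -/
lemma refl_injOn (h2 : (2 : ZMod p) ≠ 0) {ξ : ZMod p × ZMod p} (hξ : ξ ≠ 0) :
    Set.InjOn (fun n => refl n 0 ξ) (dirs p : Set (ZMod p × ZMod p)) := by
  intro n hn n' hn' h
  simp only at h
  have hN := dot_self_ne hn
  have hN' := dot_self_ne hn'
  have e1 : ξ - refl n 0 ξ = (2 * dot n ξ / dot n n) • n := by simp [refl]
  have e2 : ξ - refl n' 0 ξ = (2 * dot n' ξ / dot n' n') • n' := by simp [refl]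
  by_cases h0 : ξ - refl n 0 ξ = 0
  · have aux : ∀ m ∈ dirs p, ξ - refl m 0 ξ = 0 → dot m ξ = 0 := by
      intro m hm hm0
      have := dot_refl_zero (dot_self_ne hm) ξ
      rw [← sub_eq_zero.1 hm0] at this
      have : 2 * dot m ξ = 0 := by linear_combination this
      exact (mul_eq_zero.1 this).resolve_left h2
    exact dirs_eq_of_dot hn hn' hξ (aux n hn h0) (aux n' hn' (h ▸ h0))
  · exact dirs_eq_of_smul hn hn' h0 e1 (h ▸ e2)

/-! ### Fourier analysis -/

lemma sum_char (a : ZMod p) :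
    ∑ x : ZMod p, ZMod.stdAddChar (x * a) = if a = 0 then (p : ℂ) else 0 := by
  rw [AddChar.sum_mulShift a (ZMod.isPrimitive_stdAddChar p)]
  simp [ZMod.card]

lemma sum_char_dot (v : ZMod p × ZMod p) :
    ∑ ξ : ZMod p × ZMod p, ZMod.stdAddChar (dot ξ v) = if v = 0 then (p : ℂ) ^ 2 else 0 := by
  simp only [dot, AddChar.map_add_eq_mul, Fintype.sum_prod_type]
  rw [← Fintype.sum_mul_sum, sum_char, sum_char]
  obtain ⟨a, b⟩ := v
  by_cases ha : a = 0 <;> by_cases hb : b = 0 <;> simp [ha, hb, sq]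

lemma conj_char (a : ZMod p) : conj (ZMod.stdAddChar a : ℂ) = ZMod.stdAddChar (-a) :=
  (AddChar.map_neg_eq_conj _ _).symm

lemma parseval (E : Finset (ZMod p × ZMod p)) :
    ∑ ξ, ‖ft E ξ‖ ^ 2 = (p : ℝ) ^ 2 * #E := by
  have h : ∑ ξ, ft E ξ * conj (ft E ξ) = (p : ℂ) ^ 2 * #E := by
    simp only [ft, map_sum, conj_char, sum_mul_sum, ← AddChar.map_add_eq_mul]
    rw [sum_comm]
    have : ∀ x ∈ E, ∑ ξ, ∑ y ∈ E, (ZMod.stdAddChar (dot ξ x + -dot ξ y) : ℂ) = (p : ℂ) ^ 2 := by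
      intro x hx
      rw [sum_comm]
      have : ∀ y ∈ E, ∑ ξ, (ZMod.stdAddChar (dot ξ x + -dot ξ y) : ℂ) =
          if x = y then (p : ℂ) ^ 2 else 0 := by
        intro y _
        have := sum_char_dot (x - y)
        simp only [sub_eq_zero] at this
        rw [← this]
        refine sum_congr rfl fun ξ _ => congrArg _ ?_
        simp only [dot, Prod.fst_sub, Prod.snd_sub]; ring
      rw [sum_congr rfl this, sum_ite_eq, if_pos hx]
    rw [sum_congr rfl this]
    simp [mul_comm]
  simp only [Complex.mul_conj, Complex.normSq_eq_norm_sq] at h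
  exact_mod_cast h

/-- Fourier expansion of the reflection count. -/
lemma reflCount_eq (E : Finset (ZMod p × ZMod p)) (n : ZMod p × ZMod p) (s : ZMod p) :
    (p : ℂ) ^ 2 * reflCount E n s =
      ∑ ξ, ft E ξ * conj (ft E (refl n 0 ξ)) *
        ZMod.stdAddChar (s * (- (2 / dot n n * dot n ξ))) := by
  have h : ∀ ξ : ZMod p × ZMod p, ft E ξ * conj (ft E (refl n 0 ξ)) *
        ZMod.stdAddChar (s * (- (2 / dot n n * dot n ξ))) =
      ∑ q ∈ E ×ˢ E, (ZMod.stdAddChar (dot ξ (q.2 - refl n s q.1)) : ℂ) := by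
    intro ξ
    simp only [ft, map_sum, conj_char, sum_mul_sum, ← AddChar.map_add_eq_mul]
    rw [sum_product_right, sum_mul]
    refine sum_congr rfl fun x _ => ?_
    rw [sum_mul]
    refine sum_congr rfl fun b _ => ?_
    rw [← AddChar.map_add_eq_mul]
    congr 1
    have e : dot ξ (x - refl n s b) = dot ξ x - dot ξ (refl n s b) := by
      simp only [dot, Prod.fst_sub, Prod.snd_sub]; ring
    rw [e, dot_refl]; ring
  simp only [h]
  rw [sum_comm]
  simp only [sum_char_dot, sub_eq_zero]
  rw [← sum_filter, sum_const, nsmul_eq_mul, mul_comm, reflCount]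
  congr 3
  refine filter_congr fun q _ => eq_comm

/-- `L²` bound for an exponential sum along the values of a function `u` of the frequency. -/
lemma l2_bound {ι : Type*} [Fintype ι] (g : ι → ℂ) (u : ι → ZMod p) :
    ∑ s : ZMod p, ‖∑ ξ, g ξ * ZMod.stdAddChar (s * u ξ)‖ ^ 2 ≤
      p * ∑ ξ, ∑ η, if u ξ = u η then ‖g ξ‖ * ‖g η‖ else 0 := by
  have h : ∑ s : ZMod p, (∑ ξ, g ξ * ZMod.stdAddChar (s * u ξ)) *
        conj (∑ ξ, g ξ * ZMod.stdAddChar (s * u ξ)) =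
      p * ∑ ξ, ∑ η, if u ξ = u η then g ξ * conj (g η) else 0 := by
    simp only [map_sum, map_mul, conj_char, sum_mul_sum]
    rw [sum_comm, mul_sum]
    refine sum_congr rfl fun ξ _ => ?_
    rw [sum_comm, mul_sum]
    refine sum_congr rfl fun η _ => ?_
    have : ∀ s : ZMod p, g ξ * ZMod.stdAddChar (s * u ξ) *
        (conj (g η) * ZMod.stdAddChar (-(s * u η))) =
        g ξ * conj (g η) * ZMod.stdAddChar (s * (u ξ - u η)) := by
      intro s
      rw [mul_sub, sub_eq_add_neg, AddChar.map_add_eq_mul]; ring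
    simp only [this]
    rw [← mul_sum, sum_char]
    simp only [sub_eq_zero]
    split_ifs <;> ring
  simp only [Complex.mul_conj, Complex.normSq_eq_norm_sq] at h
  have h' := congrArg norm h
  have hnn : 0 ≤ ∑ s : ZMod p, ‖∑ ξ, g ξ * ZMod.stdAddChar (s * u ξ)‖ ^ 2 := by positivity
  rw [← Complex.ofReal_sum, Complex.norm_real, Real.norm_of_nonneg hnn] at h'
  rw [h', norm_mul, Complex.norm_natCast]
  gcongr
  refine (norm_sum_le _ _).trans (sum_le_sum fun ξ _ => (norm_sum_le _ _).trans
    (sum_le_sum fun η _ => ?_))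
  split_ifs <;> simp

/-! ### The energy bound -/

/-- Two points determine at most one direction orthogonal to their difference, so weights indexed by
such directions can be summed without loss. -/
lemma sum_dirs_le {ξ η : ZMod p × ZMod p} {x : ℝ} (hx : 0 ≤ x) :
    ∑ n ∈ dirs p, (if ξ ≠ η ∧ dot n ξ = dot n η then x else 0) ≤ x := by
  have hc : #{n ∈ dirs p | ξ ≠ η ∧ dot n ξ = dot n η} ≤ 1 := by
    refine card_le_one.2 fun n hn n' hn' => ?_
    simp only [mem_filter] at hn hn'
    have aux : ∀ m : ZMod p × ZMod p, dot m (ξ - η) = dot m ξ - dot m η := by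
      intro m; simp only [dot, Prod.fst_sub, Prod.snd_sub]; ring
    exact dirs_eq_of_dot hn.1 hn'.1 (sub_ne_zero.2 hn.2.1)
      (by rw [aux, hn.2.2, sub_self]) (by rw [aux, hn'.2.2, sub_self])
  rw [← sum_filter, sum_const, nsmul_eq_mul]
  have : ((#{n ∈ dirs p | ξ ≠ η ∧ dot n ξ = dot n η} : ℕ) : ℝ) ≤ 1 := by exact_mod_cast hc
  nlinarith

/-- The part of the energy belonging to one direction, on the Fourier side: a diagonal term and a
term supported on pairs of distinct frequencies whose difference is orthogonal to `n`. -/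
lemma energy_dir (h2 : (2 : ZMod p) ≠ 0) (E : Finset (ZMod p × ZMod p)) {n : ZMod p × ZMod p}
    (hn : dot n n ≠ 0) :
    (p : ℝ) ^ 3 * ∑ s, (reflCount E n s : ℝ) ^ 2 ≤
      ∑ ξ, ‖ft E ξ‖ ^ 2 * ‖ft E (refl n 0 ξ)‖ ^ 2 +
      ∑ ξ, ∑ η, if ξ ≠ η ∧ dot n ξ = dot n η then ‖ft E ξ‖ ^ 2 * ‖ft E η‖ ^ 2 else 0 := by
  have hp : (0 : ℝ) < p := by exact_mod_cast (Fact.out : p.Prime).pos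
  have h1 := l2_bound (fun ξ => ft E ξ * conj (ft E (refl n 0 ξ)))
    (fun ξ => - (2 / dot n n * dot n ξ))
  simp only [← reflCount_eq, norm_mul, RCLike.norm_conj, norm_pow, Complex.norm_natCast] at h1
  have hu : ∀ ξ η, (-(2 / dot n n * dot n ξ) = -(2 / dot n n * dot n η)) ↔
      dot n ξ = dot n η := by
    intro ξ η
    rw [neg_inj, mul_right_inj' (div_ne_zero h2 hn)]
  simp only [hu] at h1
  simp only [mul_pow, ← mul_sum] at h1
  have h3 : (p : ℝ) ^ 3 * ∑ s, (reflCount E n s : ℝ) ^ 2 ≤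
      ∑ ξ, ∑ η, if dot n ξ = dot n η then
        ‖ft E ξ‖ * ‖ft E (refl n 0 ξ)‖ * (‖ft E η‖ * ‖ft E (refl n 0 η)‖) else 0 := by
    refine le_of_mul_le_mul_left ?_ hp
    refine le_trans (le_of_eq ?_) h1
    ring
  refine h3.trans ?_
  set K : ZMod p × ZMod p → ZMod p × ZMod p → ℝ := fun ξ η =>
    if ξ ≠ η ∧ dot n ξ = dot n η then ‖ft E ξ‖ ^ 2 * ‖ft E η‖ ^ 2 else 0 with hK
  let ρ : Equiv.Perm (ZMod p × ZMod p) := Function.Involutive.toPerm (refl n 0) (refl_refl hn)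
  have hρ : ∀ ξ, ρ ξ = refl n 0 ξ := fun _ => rfl
  -- The reflection permutes the off-diagonal pairs, so both halves of the AM-GM bound agree.
  have hsym : ∑ ξ, ∑ η, K (ρ ξ) (ρ η) = ∑ ξ, ∑ η, K ξ η := by
    rw [Equiv.sum_comp ρ (fun ξ => ∑ η, K ξ (ρ η))]
    exact sum_congr rfl fun ξ _ => Equiv.sum_comp ρ (K ξ)
  have hpt : ∀ ξ η, (if dot n ξ = dot n η then
        ‖ft E ξ‖ * ‖ft E (refl n 0 ξ)‖ * (‖ft E η‖ * ‖ft E (refl n 0 η)‖) else 0) ≤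
      (if ξ = η then ‖ft E ξ‖ ^ 2 * ‖ft E (refl n 0 ξ)‖ ^ 2 else 0) +
        (K ξ η / 2 + K (ρ ξ) (ρ η) / 2) := by
    intro ξ η
    by_cases he : ξ = η
    · subst he
      simp only [hK, ne_eq, not_true_eq_false, false_and, if_false, if_true]
      apply le_of_eq; ring
    · have he' : ρ ξ ≠ ρ η := fun h => he (ρ.injective h)
      rw [hρ, hρ] at he'
      simp only [hK, ne_eq, he, he', not_false_eq_true, true_and, if_false, zero_add, hρ,
        dot_refl_zero hn, neg_inj]
      split_ifs
      · nlinarith [sq_nonneg (‖ft E ξ‖ * ‖ft E η‖ -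
          ‖ft E (refl n 0 ξ)‖ * ‖ft E (refl n 0 η)‖)]
      · simp
  refine (sum_le_sum fun ξ _ => sum_le_sum fun η _ => hpt ξ η).trans (le_of_eq ?_)
  simp only [sum_add_distrib, sum_ite_eq, mem_univ, if_true, ← sum_div]
  rw [hsym]; ring

/-- The bisector energy bound. The main term comes from the zero frequency; the others are controlled
by Parseval. -/
lemma energy (h2 : (2 : ZMod p) ≠ 0) (E : Finset (ZMod p × ZMod p)) :
    (p : ℝ) ^ 3 * ∑ n ∈ dirs p, ∑ s, (reflCount E n s : ℝ) ^ 2 ≤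
      (p + 1) * (#E : ℝ) ^ 4 + 2 * (p : ℝ) ^ 4 * (#E : ℝ) ^ 2 := by
  rw [mul_sum]
  refine (sum_le_sum fun n hn => energy_dir h2 E (dot_self_ne hn)).trans ?_
  rw [sum_add_distrib]
  have hoff : ∑ n ∈ dirs p, ∑ ξ, ∑ η, (if ξ ≠ η ∧ dot n ξ = dot n η then
      ‖ft E ξ‖ ^ 2 * ‖ft E η‖ ^ 2 else 0) ≤ (p : ℝ) ^ 4 * (#E : ℝ) ^ 2 := by
    rw [sum_comm]
    calc _ ≤ ∑ ξ, ∑ η, ‖ft E ξ‖ ^ 2 * ‖ft E η‖ ^ 2 := by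
          refine sum_le_sum fun ξ _ => ?_
          rw [sum_comm]
          exact sum_le_sum fun η _ => sum_dirs_le (by positivity)
      _ = (p : ℝ) ^ 4 * (#E : ℝ) ^ 2 := by
          rw [← sum_mul_sum, parseval]; ring
  have hdiag : ∑ n ∈ dirs p, ∑ ξ, ‖ft E ξ‖ ^ 2 * ‖ft E (refl n 0 ξ)‖ ^ 2 ≤
      (p + 1) * (#E : ℝ) ^ 4 + (p : ℝ) ^ 4 * (#E : ℝ) ^ 2 := by
    rw [sum_comm]
    have hpt : ∀ ξ, ∑ n ∈ dirs p, ‖ft E ξ‖ ^ 2 * ‖ft E (refl n 0 ξ)‖ ^ 2 ≤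
        (if ξ = 0 then (p + 1) * (#E : ℝ) ^ 4 else 0) +
          ‖ft E ξ‖ ^ 2 * ((p : ℝ) ^ 2 * #E) := by
      intro ξ
      by_cases h0 : ξ = 0
      · subst h0
        have hr : ∀ n : ZMod p × ZMod p, refl n 0 0 = 0 := by intro n; simp [refl, dot]
        have hf : ft E 0 = #E := by simp [ft, dot]
        simp only [hr, hf, sum_const, nsmul_eq_mul, if_true, Complex.norm_natCast]
        have hc : (#(dirs p) : ℝ) ≤ p + 1 := by exact_mod_cast card_dirs
        have : (#(dirs p) : ℝ) * ((#E : ℝ) ^ 2 * (#E : ℝ) ^ 2) ≤ (p + 1) * (#E : ℝ) ^ 4 := by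
          rw [← pow_add]; gcongr
        have : (0 : ℝ) ≤ (#E : ℝ) ^ 2 * ((p : ℝ) ^ 2 * #E) := by positivity
        linarith
      · rw [if_neg h0, zero_add, ← mul_sum, ← parseval]
        gcongr
        rw [← sum_image (f := fun η => ‖ft E η‖ ^ 2) (refl_injOn h2 h0)]
        exact sum_le_sum_of_subset_of_nonneg (subset_univ _) fun _ _ _ => by positivity
    refine (sum_le_sum fun ξ _ => hpt ξ).trans (le_of_eq ?_)
    rw [sum_add_distrib, sum_ite_eq', if_pos (mem_univ _), ← sum_mul, parseval]
    ring
  linarith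

/-! ### Incidences between points and lines -/

lemma sum_dot_dot {v w : ZMod p × ZMod p}
    (h : ∀ x, dot v x = 0 → dot w x = 0 → x = 0) (f g : ZMod p → ℝ) :
    ∑ a, f (dot v a) * g (dot w a) = (∑ s, f s) * ∑ t, g t := by
  have hinj : Function.Injective fun a : ZMod p × ZMod p => (dot v a, dot w a) := by
    intro a b hab
    simp only [Prod.mk.injEq] at hab
    have aux : ∀ m : ZMod p × ZMod p, dot m (a - b) = dot m a - dot m b := by
      intro m; simp only [dot, Prod.fst_sub, Prod.snd_sub]; ring
    exact sub_eq_zero.1 (h _ (by rw [aux, hab.1, sub_self]) (by rw [aux, hab.2, sub_self]))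
  rw [sum_mul_sum, ← Fintype.sum_prod_type' (f := fun s t => f s * g t)]
  exact Fintype.sum_bijective _ (Finite.injective_iff_bijective.1 hinj) _ _ fun _ => rfl

/-- Mean-zero line weights in different directions are orthogonal as functions on the
plane. -/
lemma sum_sq_lines (g : ZMod p × ZMod p → ZMod p → ℝ) (hg : ∀ n ∈ dirs p, ∑ s, g n s = 0) :
    ∑ a, (∑ n ∈ dirs p, g n (dot n a)) ^ 2 = p * ∑ n ∈ dirs p, ∑ s, g n s ^ 2 := by
  simp only [sq, sum_mul_sum]
  rw [sum_comm, mul_sum]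
  refine sum_congr rfl fun n hn => ?_
  rw [sum_comm, sum_eq_single_of_mem n hn]
  · have hN := dot_self_ne hn
    have := sum_dot_dot (v := n) (w := (-n.2, n.1)) ?_ (fun s => g n s * g n s) (fun _ => 1)
    · simpa [mul_comm, ZMod.card] using this
    · intro x h1 h2
      simp only [dot] at h1 h2 hN
      ext
      · refine (mul_eq_zero.1 (?_ : (n.1 * n.1 + n.2 * n.2) * x.1 = 0)).resolve_left hN
        linear_combination n.1 * h1 - n.2 * h2
      · refine (mul_eq_zero.1 (?_ : (n.1 * n.1 + n.2 * n.2) * x.2 = 0)).resolve_left hN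
        linear_combination n.2 * h1 + n.1 * h2
  · intro m hm hmn
    rw [sum_dot_dot, hg n hn, zero_mul]
    intro x h1 h2
    by_contra hx
    exact hmn (dirs_eq_of_dot hm hn hx h2 h1)

/-- Variance bound for the number of weighted lines through a point. -/
lemma variance (b : ZMod p × ZMod p → ZMod p → ℝ) :
    ∑ a, (∑ n ∈ dirs p, b n (dot n a) - (∑ n ∈ dirs p, ∑ s, b n s) / p) ^ 2 ≤
      p * ∑ n ∈ dirs p, ∑ s, b n s ^ 2 := by
  have hp : (p : ℝ) ≠ 0 := by exact_mod_cast (Fact.out : p.Prime).ne_zero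
  have hp0 : (0 : ℝ) < p := by exact_mod_cast (Fact.out : p.Prime).pos
  have h := sum_sq_lines (fun n s => b n s - (∑ t, b n t) / p) (fun n _ => by
    rw [sum_sub_distrib, sum_const, nsmul_eq_mul, card_univ, ZMod.card, mul_div_cancel₀ _ hp,
      sub_self])
  simp only [sum_sub_distrib, ← sum_div] at h
  rw [h]
  refine mul_le_mul_of_nonneg_left (sum_le_sum fun n _ => ?_) hp0.le
  have : ∑ s, (b n s - (∑ t, b n t) / p) ^ 2 = ∑ s, b n s ^ 2 - (∑ t, b n t) ^ 2 / p := by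
    simp only [sub_sq, sum_add_distrib, sum_sub_distrib, ← sum_mul, ← mul_sum, sum_const,
      nsmul_eq_mul, card_univ, ZMod.card]
    field_simp
    ring
  rw [this]
  have : 0 ≤ (∑ t, b n t) ^ 2 / p := by positivity
  linarith

/-! ### Isosceles triangles -/

/-- A pair of distinct points has at most one bisector. -/
lemma sum_bisCount_le (h2 : (2 : ZMod p) ≠ 0) (E : Finset (ZMod p × ZMod p)) :
    ∑ n ∈ dirs p, ∑ s, bisCount E n s ≤ #E ^ 2 := by
  rw [← sum_product']
  simp only [bisCount, card_filter]
  rw [sum_comm, sq, ← card_product, card_eq_sum_ones]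
  refine sum_le_sum fun q _ => ?_
  rw [← card_filter]
  refine card_le_one.2 ?_
  rintro ⟨n, s⟩ h ⟨n', s'⟩ h'
  simp only [mem_filter, mem_product, mem_univ, and_true] at h h'
  obtain ⟨hn, hne, h⟩ := h
  obtain ⟨hn', -, h'⟩ := h'
  have e : ∀ m t, refl m t q.1 = q.2 → q.1 - q.2 = (2 * (dot m q.1 - t) / dot m m) • m := by
    intro m t hm; rw [← hm]; simp [refl]
  have hnn : n = n' := dirs_eq_of_smul hn hn' (sub_ne_zero.2 hne) (e _ _ h) (e _ _ h')
  subst hnn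
  have hN := dot_self_ne hn
  have hn0 : n ≠ 0 := by rintro rfl; simp [dot] at hN
  have := smul_left_injective (ZMod p) hn0 ((e _ _ h).symm.trans (e _ _ h'))
  simp only [div_left_inj' hN] at this
  have := mul_left_cancel₀ h2 this
  rw [sub_right_inj.1 this]

/-- If `a` is equidistant from `b` and `c`, and `‖b - c‖ ≠ 0`, then `c` is the mirror
image of `b` in a line through `a` of non-isotropic normal direction. -/
lemma exists_refl {a b c : ZMod p × ZMod p}
    (h : fdist a b = fdist a c) (hne : fdist b c ≠ 0) :
    ∃ n ∈ dirs p, b ≠ c ∧ refl n (dot n a) b = c := by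
  obtain ⟨n, hn, l, hl⟩ := exists_dirs (v := b - c) (by
    convert hne using 1
    simp only [dot, fdist, Prod.fst_sub, Prod.snd_sub]; ring)
  have hbc : b ≠ c := by rintro rfl; simp [fdist] at hne
  have hN := dot_self_ne hn
  obtain rfl : b = c + l • n := by rw [← hl]; abel
  have hl0 : l ≠ 0 := by rintro rfl; simp at hbc
  refine ⟨n, hn, hbc, ?_⟩
  have key : 2 * (dot n (c + l • n) - dot n a) = l * dot n n := by
    apply mul_left_cancel₀ hl0
    simp only [fdist, dot, Prod.fst_add, Prod.snd_add, Prod.smul_fst, Prod.smul_snd,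
      smul_eq_mul] at h ⊢
    linear_combination h
  rw [refl, key, mul_div_cancel_right₀ _ hN, add_sub_cancel_right]

lemma tripleCount_le (E F : Finset (ZMod p × ZMod p)) :
    tripleCount (F : Set (ZMod p × ZMod p)) ↑E ↑E ≤
      ∑ a ∈ F, ∑ n ∈ dirs p, bisCount E n (dot n a) := by
  classical
  have hset : {t : (ZMod p × ZMod p) × (ZMod p × ZMod p) × (ZMod p × ZMod p) |
      t.1 ∈ (F : Set (ZMod p × ZMod p)) ∧ t.2.1 ∈ (E : Set (ZMod p × ZMod p)) ∧
      t.2.2 ∈ (E : Set (ZMod p × ZMod p)) ∧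
      fdist t.1 t.2.1 = fdist t.1 t.2.2 ∧ fdist t.2.1 t.2.2 ≠ 0} ⊆
      ((F.biUnion fun a => (dirs p).biUnion fun n =>
        ({q ∈ E ×ˢ E | q.1 ≠ q.2 ∧ refl n (dot n a) q.1 = q.2}).image fun q => (a, q) :
          Finset _) : Set _) := by
    rintro ⟨a, b, c⟩ ⟨ha, hb, hc, h, hne⟩
    obtain ⟨n, hn, hbc, hr⟩ := exists_refl h hne
    simp only [coe_biUnion, Set.mem_iUnion, mem_coe, mem_image, mem_filter, mem_product]
    exact ⟨a, ha, n, hn, (b, c), ⟨⟨hb, hc⟩, hbc, hr⟩, rfl⟩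
  refine (Set.ncard_le_ncard hset (finite_toSet _)).trans ?_
  rw [Set.ncard_coe_finset]
  exact card_biUnion_le.trans (sum_le_sum fun a _ => card_biUnion_le.trans
    (sum_le_sum fun n _ => card_image_le))

end IsoTri

/-- Let `p` be an odd prime and `E, F ⊆ 𝔽_p²` with `|F| ≥ 8p` and `|F||E|² ≥ 64 p⁴`. Then
`𝒯*(F, E, E) ≤ 2|F||E|²/p`. -/
theorem isosceles_two_sets_large_bound (p : ℕ) (hp : p.Prime) (hodd : Odd p)
    (E F : Finset (ZMod p × ZMod p))
    (hF : 8 * p ≤ F.card) (hFE : 64 * p ^ 4 ≤ F.card * E.card ^ 2) :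
    (tripleCount (F : Set (ZMod p × ZMod p)) ↑E ↑E : ℝ) ≤
      2 * (F.card : ℝ) * (E.card : ℝ) ^ 2 / p := by
  have : Fact p.Prime := ⟨hp⟩
  have h2 : (2 : ZMod p) ≠ 0 := by
    have hp2 : p ≠ 2 := by rintro rfl; exact absurd hodd (by decide)
    exact Ring.two_ne_zero (by rwa [ZMod.ringChar_zmod_n])
  have hp1 : (1 : ℝ) ≤ p := by exact_mod_cast hp.one_le
  have hp0 : (0 : ℝ) < p := by linarith
  have hT : (tripleCount (F : Set (ZMod p × ZMod p)) ↑E ↑E : ℝ) ≤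
      ∑ a ∈ F, ∑ n ∈ IsoTri.dirs p, (IsoTri.bisCount E n (IsoTri.dot n a) : ℝ) := by
    exact_mod_cast IsoTri.tripleCount_le E F
  have hW : ∑ n ∈ IsoTri.dirs p, ∑ s, (IsoTri.bisCount E n s : ℝ) ≤ (E.card : ℝ) ^ 2 := by
    exact_mod_cast IsoTri.sum_bisCount_le h2 E
  have hV := IsoTri.variance (p := p) (fun n s => (IsoTri.bisCount E n s : ℝ))
  have hQ := IsoTri.energy h2 E
  have hBR : ∑ n ∈ IsoTri.dirs p, ∑ s, (IsoTri.bisCount E n s : ℝ) ^ 2 ≤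
      ∑ n ∈ IsoTri.dirs p, ∑ s, (IsoTri.reflCount E n s : ℝ) ^ 2 := by
    refine Finset.sum_le_sum fun n _ => Finset.sum_le_sum fun s _ => ?_
    have : IsoTri.bisCount E n s ≤ IsoTri.reflCount E n s :=
      Finset.card_le_card fun q hq => by
        simp only [Finset.mem_filter] at hq ⊢
        exact ⟨hq.1, hq.2.2⟩
    gcongr
  have hF' : 8 * (p : ℝ) ≤ F.card := by exact_mod_cast hF
  have hFE' : 64 * (p : ℝ) ^ 4 ≤ F.card * (E.card : ℝ) ^ 2 := by exact_mod_cast hFE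
  set S : ZMod p × ZMod p → ℝ := fun a =>
    ∑ n ∈ IsoTri.dirs p, (IsoTri.bisCount E n (IsoTri.dot n a) : ℝ) with hS
  set W : ℝ := ∑ n ∈ IsoTri.dirs p, ∑ s, (IsoTri.bisCount E n s : ℝ)
  set Q : ℝ := ∑ n ∈ IsoTri.dirs p, ∑ s, (IsoTri.reflCount E n s : ℝ) ^ 2
  set f : ℝ := (F.card : ℝ)
  set e : ℝ := (E.card : ℝ)
  have hf0 : 0 ≤ f := Nat.cast_nonneg _
  have he0 : 0 ≤ e := Nat.cast_nonneg _
  have hV' : ∑ a ∈ F, (S a - W / p) ^ 2 ≤ p * Q :=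
    (Finset.sum_le_sum_of_subset_of_nonneg (Finset.subset_univ F)
      fun _ _ _ => sq_nonneg _).trans (hV.trans (by gcongr))
  have hCS : (∑ a ∈ F, (S a - W / p)) ^ 2 ≤ f * (p * Q) :=
    sq_sum_le_card_mul_sum_sq.trans (by gcongr)
  have hQ' : (p : ℝ) ^ 3 * Q ≤ f * e ^ 4 := by
    have a1 : (p + 1) * e ^ 4 ≤ (f / 4) * e ^ 4 := by gcongr; linarith
    have a2 : (64 * (p : ℝ) ^ 4) * e ^ 2 ≤ (f * e ^ 2) * e ^ 2 := by gcongr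
    have a3 : 0 ≤ f * e ^ 4 := by positivity
    nlinarith
  have hfin : (∑ a ∈ F, (S a - W / p)) ^ 2 ≤ (f * e ^ 2 / p) ^ 2 := by
    refine hCS.trans ?_
    rw [div_pow, le_div_iff₀ (by positivity)]
    have := mul_le_mul_of_nonneg_left hQ' hf0
    nlinarith
  have hle := abs_le_of_sq_le_sq' hfin (by positivity)
  rw [Finset.sum_sub_distrib, Finset.sum_const, nsmul_eq_mul] at hle
  have hWf : f * (W / p) ≤ f * e ^ 2 / p := by
    rw [← mul_div_assoc]; gcongr
  have : 2 * f * e ^ 2 / p = f * e ^ 2 / p + f * e ^ 2 / p := by ring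
  rw [this]
  linarith [hle.2]
end
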